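/- arXiv:1603.05702 — 2 statements merged into one kernel-verified Lean document; each statement's English description precedes it below -/
import Mathlib

section
/- Under the standing assumptions (C braided monoidal with coequalizers preserved by the monoidal product, composites of regular epimorphisms regular epi; (A,t₁,t₂,t₃,t₄,e₁,e₂,j) a regular weak multiplier bimonoid with m a regular epimorphism, non-degenerate with respect to a class 𝒴 containing I, A and L; n₁ non-degenerate on the right with respect to 𝒴), the base object L is a module over the semigroup A via the action p∘n₂ : A⊗L → L; that is, p∘n₂ is associative ((p∘n₂)∘(m⊗1) = (p∘n₂)∘(1⊗(p∘n₂))), a regular epimorphism, and non-degenerate on the left with respect to 𝒴. -/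
open CategoryTheory Category MonoidalCategory Limits

universe v u

namespace WeakMultiplierBimonoid

variable {C : Type u} [Category.{v} C] [MonoidalCategory C] [BraidedCategory C]

def wl {A : C} (f : A ⊗ A ⟶ A ⊗ A) : A ⊗ (A ⊗ A) ⟶ A ⊗ (A ⊗ A) :=
  (α_ A A A).inv ≫ (f ▷ A) ≫ (α_ A A A).hom

def ml {A : C} (f : A ⊗ A ⟶ A) : A ⊗ (A ⊗ A) ⟶ A ⊗ A :=
  (α_ A A A).inv ≫ (f ▷ A)

def NdLeftOn {Z V W : C} (v : Z ⊗ V ⟶ W) (𝒴 : Set C) : Prop :=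
  ∀ (X : C), ∀ Y ∈ 𝒴, Function.Injective
    (fun g : X ⟶ V ⊗ Y => (Z ◁ g) ≫ (α_ Z V Y).inv ≫ (v ▷ Y))

def NdRightOn {Z V W : C} (v : Z ⊗ V ⟶ W) (𝒴 : Set C) : Prop :=
  NdLeftOn ((β_ V Z).hom ≫ v) 𝒴

/-- The "middle braiding" `1 ⊗ c ⊗ 1 : A⁴ ⟶ A⁴` on `(A ⊗ A) ⊗ (A ⊗ A)`. -/
def midSw (A : C) : (A ⊗ A) ⊗ (A ⊗ A) ⟶ (A ⊗ A) ⊗ (A ⊗ A) :=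
  (α_ A A (A ⊗ A)).hom ≫ (A ◁ (α_ A A A).inv) ≫ (A ◁ ((β_ A A).hom ▷ A)) ≫
    (A ◁ (α_ A A A).hom) ≫ (α_ A A (A ⊗ A)).inv

/-- A regular weak multiplier bimonoid on an object `A` of a braided monoidal category,
with multiplication non-degenerate with respect to the class `𝒴`
(Definition 2.9 of the paper). -/
structure RWMB (A : C) (𝒴 : Set C) where
  t₁ : A ⊗ A ⟶ A ⊗ A
  t₂ : A ⊗ A ⟶ A ⊗ A
  t₃ : A ⊗ A ⟶ A ⊗ A
  t₄ : A ⊗ A ⟶ A ⊗ A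
  e₁ : A ⊗ A ⟶ A ⊗ A
  e₂ : A ⊗ A ⟶ A ⊗ A
  j : A ⟶ 𝟙_ C
  /-- the induced multiplication -/
  m : A ⊗ A ⟶ A
  /-- counit condition (m1); in particular `m` is the induced multiplication -/
  hm₁ : m = t₁ ≫ (j ▷ A) ≫ (λ_ A).hom
  /-- counit condition (m2) -/
  hm₂ : m = t₂ ≫ (A ◁ j) ≫ (ρ_ A).hom
  /-- counit condition (m3) -/
  hm₃ : m = (β_ A A).hom ≫ t₃ ≫ (j ▷ A) ≫ (λ_ A).hom
  /-- counit condition (m4) -/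
  hm₄ : m = (β_ A A).hom ≫ t₄ ≫ (A ◁ j) ≫ (ρ_ A).hom
  /-- the class `𝒴` contains the monoidal unit -/
  memI : (𝟙_ C) ∈ 𝒴
  memA : A ∈ 𝒴
  memAA : (A ⊗ A) ∈ 𝒴
  /-- `m` is non-degenerate on the left with respect to `𝒴` -/
  ndl : NdLeftOn m 𝒴
  /-- `m` is non-degenerate on the right with respect to `𝒴` -/
  ndr : NdRightOn m 𝒴
  /-- relation (c12) -/
  hc12 : (A ◁ t₁) ≫ ml m = wl t₂ ≫ (A ◁ m)
  /-- relation (c13) -/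
  hc13 : wl t₁ ≫ (A ◁ (β_ A A).hom) ≫ (A ◁ m)
    = (A ◁ (β_ A A).hom) ≫ wl t₃ ≫ (A ◁ m)
  /-- relation (c14) -/
  hc14 : (A ◁ t₁) ≫ wl (β_ A A).hom ≫ ml m = wl t₄ ≫ (A ◁ m)
  /-- relation (c23) -/
  hc23 : wl t₂ ≫ (A ◁ (β_ A A).hom) ≫ (A ◁ m) = (A ◁ t₃) ≫ ml m
  /-- relation (c24) -/
  hc24 : (A ◁ t₂) ≫ wl (β_ A A).hom ≫ ml m = wl (β_ A A).hom ≫ (A ◁ t₄) ≫ ml m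
  /-- relation (c34) -/
  hc34 : (A ◁ t₃) ≫ wl (β_ A A).hom ≫ ml m = wl t₄ ≫ (A ◁ (β_ A A).hom) ≫ (A ◁ m)
  /-- interchange relation for `(t₂, t₁)` -/
  hi21 : (A ◁ t₁) ≫ wl t₂ = wl t₂ ≫ (A ◁ t₁)
  /-- interchange relation for `(t₄, t₁)` -/
  hi41 : (A ◁ t₁) ≫ wl t₄ = wl t₄ ≫ (A ◁ t₁)
  /-- interchange relation for `(t₂, t₃)` -/
  hi23 : (A ◁ t₃) ≫ wl t₂ = wl t₂ ≫ (A ◁ t₃)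
  /-- interchange relation for `(t₄, t₃)` -/
  hi43 : (A ◁ t₃) ≫ wl t₄ = wl t₄ ≫ (A ◁ t₃)
  /-- compatibility of the idempotents `e₁`, `e₂`:
  `(m ⊗ m) ∘ (1 ⊗ c ⊗ 1) ∘ (1 ⊗ 1 ⊗ e₁) = (m ⊗ m) ∘ (1 ⊗ c ⊗ 1) ∘ (e₂ ⊗ 1 ⊗ 1)` -/
  hecomp : ((A ⊗ A) ◁ e₁) ≫ midSw A ≫ (m ▷ (A ⊗ A)) ≫ (A ◁ m)
    = (e₂ ▷ (A ⊗ A)) ≫ midSw A ≫ (m ▷ (A ⊗ A)) ≫ (A ◁ m)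
  /-- Axiom I for the weakly counital fusion morphism `(t₁, e₁, j)` -/
  ax1 : (A ◁ t₁) ≫ wl (β_ A A).hom ≫ (A ◁ t₁) ≫ wl (β_ A A).inv ≫ wl t₁
    = wl t₁ ≫ (A ◁ t₁)
  /-- Axiom II -/
  ax2 : e₁ ≫ e₁ = e₁
  /-- Axiom III -/
  ax3 : t₁ ≫ e₁ = t₁
  /-- Axiom IV -/
  ax4 : (A ◁ e₁) ≫ (A ◁ (β_ A A).inv) ≫ wl t₁ ≫ (A ◁ (β_ A A).hom) ≫ ml m
    = (A ◁ (β_ A A).inv) ≫ wl t₁ ≫ (A ◁ (β_ A A).hom) ≫ ml m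
  /-- Axiom V -/
  ax5 : (A ◁ t₁) ≫ wl e₁ = wl e₁ ≫ (A ◁ t₁)
  /-- Axiom VI -/
  ax6 : wl t₁ ≫ (A ◁ e₁)
    = (A ◁ (β_ A A).inv) ≫ wl e₁ ≫ (A ◁ (β_ A A).hom) ≫ wl t₁
  /-- Axiom VII -/
  ax7 : wl t₁ ≫ (A ◁ ((j ▷ A) ≫ (λ_ A).hom)) ≫ m
    = (A ◁ (β_ A A).hom) ≫ (A ◁ e₁) ≫ (A ◁ ((A ◁ j) ≫ (ρ_ A).hom)) ≫ m
  /-- Axiom VIII -/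
  ax8 : wl t₁ ≫ (A ◁ (β_ A A).hom) ≫ ml m ≫ (j ▷ A) ≫ (λ_ A).hom
    = (A ◁ (β_ A A).hom) ≫ (A ◁ e₁) ≫ (A ◁ ((j ▷ A) ≫ (λ_ A).hom)) ≫ m

namespace RWMB

variable {A : C} {𝒴 : Set C} (S : RWMB A 𝒴)

/-- `⊓ᴸ₁ := (j ⊗ 1) ∘ e₁`. -/
def piL1 : A ⊗ A ⟶ A := S.e₁ ≫ (S.j ▷ A) ≫ (λ_ A).hom

/-- `⊓ᴸ₂ := (j ⊗ 1) ∘ t₄ ∘ c`. -/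
def piL2 : A ⊗ A ⟶ A := (β_ A A).hom ≫ S.t₄ ≫ (S.j ▷ A) ≫ (λ_ A).hom

/-- `⊓̄ᴿ₁ ∘ c⁻¹ = (1 ⊗ j) ∘ e₁`, the second leg of the coequalizer defining the base
object. -/
def piBarR1c : A ⊗ A ⟶ A := S.e₁ ≫ (A ◁ S.j) ≫ (ρ_ A).hom

end RWMB


section helpers

theorem nd_cancel {Z V W X : C} {v : Z ⊗ V ⟶ W} {𝒴 : Set C} (hv : NdLeftOn v 𝒴)
    (hI : (𝟙_ C) ∈ 𝒴) {f g : X ⟶ V} (h : Z ◁ f ≫ v = Z ◁ g ≫ v) : f = g := by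
  have key : f ≫ (ρ_ V).inv = g ≫ (ρ_ V).inv := by
    apply hv X _ hI
    have aux : ∀ k : X ⟶ V, (Z ◁ (k ≫ (ρ_ V).inv)) ≫ (α_ Z V (𝟙_ C)).inv ≫ (v ▷ 𝟙_ C)
        = (Z ◁ k ≫ v) ≫ (ρ_ W).inv := by
      intro k
      simp
    show _ = _
    simp only [aux, h]
  simpa using key

theorem nd_cancel_right {Z V W X : C} {v : Z ⊗ V ⟶ W} {𝒴 : Set C} (hv : NdRightOn v 𝒴)
    (hI : (𝟙_ C) ∈ 𝒴) {f g : X ⟶ Z} (h : f ▷ V ≫ v = g ▷ V ≫ v) : f = g := by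
  apply nd_cancel hv hI
  simp only [BraidedCategory.braiding_naturality_right_assoc, h]

/-- Two ways of letting `t` act on the first and third strands. -/
theorem braid13 {A B D : C} (t : A ⊗ B ⟶ A ⊗ B) :
    (A ◁ (β_ B D).inv) ≫ (α_ A B D).inv ≫ (t ▷ D) ≫ (α_ A B D).hom ≫ (A ◁ (β_ B D).hom)
    = (α_ A D B).inv ≫ ((β_ A D).hom ▷ B) ≫ (α_ D A B).hom ≫ (D ◁ t) ≫ (α_ D A B).inv ≫
      ((β_ A D).inv ▷ B) ≫ (α_ A D B).hom := by
  have h := BraidedCategory.braiding_naturality_left t D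
  rw [BraidedCategory.braiding_tensor_left_hom] at h
  rw [← cancel_epi (A ◁ (β_ B D).hom), ← cancel_epi (α_ A B D).hom,
    ← cancel_mono (α_ A D B).inv, ← cancel_mono ((β_ A D).hom ▷ B),
    ← cancel_mono (α_ D A B).hom]
  simpa using h

namespace RWMB

variable {A : C} {𝒴 : Set C} (S : RWMB A 𝒴)

theorem t1_piL1 : S.t₁ ≫ S.piL1 = S.m := by
  rw [piL1, ← assoc, S.ax3, ← S.hm₁]

/-- The morphism built from `u` by "`d ⊗ z ⊗ c ↦ u(d₁, z) d₂ c`". -/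
def Phi {Z : C} (u : A ⊗ Z ⟶ 𝟙_ C) : A ⊗ (Z ⊗ A) ⟶ A :=
  (A ◁ (β_ A Z).inv) ≫ (α_ A A Z).inv ≫ (S.t₁ ▷ Z) ≫ (α_ A A Z).hom ≫ (A ◁ (β_ A Z).hom) ≫
    (α_ A Z A).inv ≫ (u ▷ A) ≫ (λ_ A).hom

theorem Phi_nat {Z Z' : C} (f : Z' ⟶ Z) (u : A ⊗ Z ⟶ 𝟙_ C) :
    S.Phi (A ◁ f ≫ u) = (A ◁ (f ▷ A)) ≫ S.Phi u := by
  have e1 : (A ◁ (f ▷ A)) ≫ (A ◁ (β_ A Z).inv) = (A ◁ (β_ A Z').inv) ≫ (A ◁ (A ◁ f)) := by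
    rw [← MonoidalCategory.whiskerLeft_comp, ← MonoidalCategory.whiskerLeft_comp,
      BraidedCategory.braiding_inv_naturality_left]
  have e2 : (A ◁ (A ◁ f)) ≫ (A ◁ (β_ A Z).hom) = (A ◁ (β_ A Z').hom) ≫ (A ◁ (f ▷ A)) := by
    rw [← MonoidalCategory.whiskerLeft_comp, ← MonoidalCategory.whiskerLeft_comp,
      BraidedCategory.braiding_naturality_right]
  unfold Phi
  rw [reassoc_of% e1, associator_inv_naturality_right_assoc, whisker_exchange_assoc,
    associator_naturality_right_assoc, reassoc_of% e2]
  simp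

theorem ax8' : (A ◁ S.piL1) ≫ S.m = S.Phi (S.m ≫ S.j) := by
  have h := S.ax8
  rw [← cancel_epi (A ◁ (β_ A A).hom)]
  simp only [wl, ml, assoc] at h
  simp only [Phi, piL1, MonoidalCategory.whiskerLeft_comp, assoc, comp_whiskerRight] at h ⊢
  rw [← h]
  simp

theorem m_assoc : (α_ A A A).inv ≫ (S.m ▷ A) ≫ S.m = (A ◁ S.m) ≫ S.m := by
  have h := S.ax1 =≫ (S.j ▷ (A ⊗ A) ≫ (λ_ _).hom ≫ S.j ▷ A ≫ (λ_ A).hom)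
  have h8 := S.ax8'
  have hb := braid13 (D := A) S.t₁
  have e1 : wl S.t₁ ≫ (S.j ▷ (A ⊗ A)) ≫ (λ_ _).hom = ml S.m := by
    rw [S.hm₁]
    simp [wl, ml]
  have e2 : (A ◁ S.t₁) ≫ (S.j ▷ (A ⊗ A)) ≫ (λ_ _).hom ≫ S.j ▷ A ≫ (λ_ A).hom
      = (A ◁ S.m) ≫ S.j ▷ A ≫ (λ_ A).hom := by
    rw [S.hm₁, whisker_exchange_assoc, whisker_exchange_assoc]
    simp
  have e3 : wl S.t₁ ≫ (A ◁ S.m) ≫ S.j ▷ A ≫ (λ_ A).hom = (α_ A A A).inv ≫ (S.m ▷ A) ≫ S.m := by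
    rw [whisker_exchange_assoc, leftUnitor_naturality, ]
    have := e1 =≫ S.m
    simpa [ml] using this
  simp only [assoc] at h
  rw [e2, e3, reassoc_of% e1] at h
  rw [← h, ← S.t1_piL1, MonoidalCategory.whiskerLeft_comp, assoc, S.t1_piL1, h8, Phi]
  rw [reassoc_of% hb]
  simp [wl, ml]

theorem m_braid : (β_ A A).hom ≫ S.m = (β_ A A).inv ≫ S.m := by
  have hi : S.t₃ ≫ (S.j ▷ A) ≫ (λ_ A).hom = (β_ A A).inv ≫ S.m := by
    rw [Iso.eq_inv_comp, ← S.hm₃]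
  have h := S.hc13 =≫ (S.j ▷ A ≫ (λ_ A).hom)
  have hass := S.m_assoc
  apply nd_cancel_right S.ndr S.memI
  have e1 : wl S.t₁ ≫ (S.j ▷ (A ⊗ A)) ≫ (λ_ _).hom = ml S.m := by
    rw [S.hm₁]
    simp [wl, ml]
  have e3 : wl S.t₃ ≫ (S.j ▷ (A ⊗ A)) ≫ (λ_ _).hom
      = (α_ A A A).inv ≫ ((β_ A A).inv ≫ S.m) ▷ A := by
    rw [← hi]
    simp [wl]
  simp only [assoc, whisker_exchange_assoc, leftUnitor_naturality,
    leftUnitor_naturality_assoc] at h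
  rw [reassoc_of% e1, reassoc_of% e3] at h
  rw [ml, assoc, BraidedCategory.braiding_naturality_left_assoc,
    BraidedCategory.braiding_tensor_left_hom] at h
  simp only [assoc, Iso.inv_hom_id_assoc] at h
  rw [← hass] at h
  rw [← cancel_epi (α_ A A A).inv, ← cancel_epi (A ◁ (β_ A A).hom)]
  simpa using h

theorem L3 : (α_ A A A).inv ≫ (S.piL2 ▷ A) ≫ S.m = (A ◁ S.piL1) ≫ S.m := by
  have h := wl (β_ A A).hom ≫= (S.hc14 =≫ (S.j ▷ A ≫ (λ_ A).hom))
  have hb := braid13 (D := A) S.t₁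
  have e : wl (β_ A A).hom ≫ ml S.m = wl (β_ A A).inv ≫ ml S.m := by
    have := S.m_braid
    simp only [wl, ml, assoc, Iso.hom_inv_id_assoc, ← comp_whiskerRight, this]
  have e1 : wl (β_ A A).hom ≫ wl S.t₄ ≫ (S.j ▷ (A ⊗ A)) ≫ (λ_ _).hom
      = (α_ A A A).inv ≫ S.piL2 ▷ A := by
    simp [wl, piL2]
  simp only [assoc, whisker_exchange_assoc, leftUnitor_naturality] at h
  rw [reassoc_of% e1, reassoc_of% e] at h
  rw [← h, S.ax8', Phi, reassoc_of% hb]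
  simp [wl, ml]

theorem piL2_lin : (A ◁ S.piL2) ≫ S.m = (α_ A A A).inv ≫ (S.m ▷ A) ≫ S.piL2 := by
  have h3 := S.L3
  have ha := S.m_assoc
  have ha' : (S.m ▷ A) ≫ S.m = (α_ A A A).hom ≫ (A ◁ S.m) ≫ S.m := by
    rw [← ha, Iso.hom_inv_id_assoc]
  have h3' : (S.piL2 ▷ A) ≫ S.m = (α_ A A A).hom ≫ (A ◁ S.piL1) ≫ S.m := by
    rw [← h3, Iso.hom_inv_id_assoc]
  have h3'' := congrArg (fun k => A ◁ k) h3'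
  simp only [MonoidalCategory.whiskerLeft_comp] at h3''
  apply nd_cancel_right S.ndr S.memI
  simp only [comp_whiskerRight, assoc]
  rw [ha', h3', associator_naturality_middle_assoc, reassoc_of% h3'', ← ha,
    associator_inv_naturality_right_assoc, associator_naturality_left_assoc,
    ← whisker_exchange_assoc]
  simp only [← assoc]
  congr 3
  monoidal

theorem piL2_j : S.piL2 ≫ S.j = S.m ≫ S.j := by
  rw [S.hm₄, piL2]
  simp only [assoc]
  congr 2
  rw [← leftUnitor_naturality, ← rightUnitor_naturality, whisker_exchange_assoc]
  simp [unitors_equal]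

theorem claimB {A L Y : C} (u : A ⊗ L ⟶ 𝟙_ C) :
    (A ◁ (L ◁ (β_ A Y).hom)) ≫ (A ◁ (α_ L Y A).inv) ≫ (α_ A (L ⊗ Y) A).inv ≫
      (((α_ A L Y).inv ≫ (u ▷ Y) ≫ (λ_ Y).hom) ▷ A) ≫ (β_ A Y).inv
    = (α_ A L (A ⊗ Y)).inv ≫ (u ▷ (A ⊗ Y)) ≫ (λ_ (A ⊗ Y)).hom := by
  have e : (A ◁ (α_ L Y A).inv) ≫ (α_ A (L ⊗ Y) A).inv ≫
      (((α_ A L Y).inv ≫ (u ▷ Y) ≫ (λ_ Y).hom) ▷ A)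
      = (α_ A L (Y ⊗ A)).inv ≫ (u ▷ (Y ⊗ A)) ≫ (λ_ (Y ⊗ A)).hom := by
    monoidal
  rw [reassoc_of% e, associator_inv_naturality_right_assoc, whisker_exchange_assoc,
    leftUnitor_naturality_assoc]
  simp

theorem nd_formula {L X Y : C} (u : A ⊗ L ⟶ 𝟙_ C) (n₁ : L ⊗ A ⟶ A)
    (hn : (A ◁ n₁) ≫ S.m = S.Phi u) (g : X ⟶ L ⊗ Y) :
    (A ◁ ((A ◁ g) ≫ (α_ A L Y).inv ≫ (((β_ A L).hom ≫ n₁) ▷ Y))) ≫ (α_ A A Y).inv ≫ (S.m ▷ Y)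
    = (α_ A A X).inv ≫ (S.t₁ ▷ X) ≫ (α_ A A X).hom ≫ (A ◁ (β_ A X).hom) ≫ (α_ A X A).inv ≫
      (((A ◁ g) ≫ (α_ A L Y).inv ≫ (u ▷ Y) ≫ (λ_ Y).hom) ▷ A) ≫ (β_ A Y).inv := by
  have hn' : (A ◁ (n₁ ▷ Y)) ≫ (α_ A A Y).inv ≫ (S.m ▷ Y)
      = (α_ A (L ⊗ A) Y).inv ≫ (S.Phi u ▷ Y) := by
    rw [← hn]
    simp
  have hP : (A ◁ (β_ A L).hom) ≫ S.Phi u = (α_ A A L).inv ≫ (S.t₁ ▷ L) ≫ (α_ A A L).hom ≫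
      (A ◁ (β_ A L).hom) ≫ (α_ A L A).inv ≫ (u ▷ A) ≫ (λ_ A).hom := by
    simp [Phi]
  have hL : (A ◁ ((A ◁ g) ≫ (α_ A L Y).inv ≫ (((β_ A L).hom ≫ n₁) ▷ Y))) ≫
      (α_ A A Y).inv ≫ (S.m ▷ Y)
      = (A ◁ (A ◁ g)) ≫ (A ◁ (α_ A L Y).inv) ≫ (α_ A (A ⊗ L) Y).inv ≫
        (((A ◁ (β_ A L).hom) ≫ S.Phi u) ▷ Y) := by
    simp only [MonoidalCategory.whiskerLeft_comp, comp_whiskerRight, assoc]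
    rw [hn']
    simp
  have eg : (A ◁ (β_ A X).hom) ≫ (α_ A X A).inv ≫ ((A ◁ g) ▷ A)
      = (A ◁ (A ◁ g)) ≫ (A ◁ (β_ A (L ⊗ Y)).hom) ≫ (α_ A (L ⊗ Y) A).inv := by
    rw [← MonoidalCategory.whiskerLeft_comp_assoc, BraidedCategory.braiding_naturality_right]
    simp
  have hB := claimB (Y := Y) u
  rw [hL, hP, comp_whiskerRight _ _ A, assoc, reassoc_of% eg,
    ← associator_naturality_right_assoc, ← whisker_exchange_assoc,
    ← associator_inv_naturality_right_assoc,
    BraidedCategory.braiding_tensor_right_hom]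
  simp only [MonoidalCategory.whiskerLeft_comp, assoc]
  rw [hB]
  monoidal

end RWMB

theorem epi_whiskerLeft {X Y : C} {f : X ⟶ Y} (hf : Nonempty (RegularEpi f)) (Z : C)
    (pres : PreservesColimitsOfShape WalkingParallelPair (tensorLeft Z)) : Epi (Z ◁ f) := by
  obtain ⟨r⟩ := hf
  exact Cofork.IsColimit.epi (isColimitCoforkMapOfIsColimit (tensorLeft Z) r.w r.isColimit)

theorem epi_whiskerRight {X Y : C} {f : X ⟶ Y} (hf : Nonempty (RegularEpi f)) (Z : C)
    (pres : PreservesColimitsOfShape WalkingParallelPair (tensorRight Z)) : Epi (f ▷ Z) := by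
  obtain ⟨r⟩ := hf
  exact Cofork.IsColimit.epi (isColimitCoforkMapOfIsColimit (tensorRight Z) r.w r.isColimit)

theorem regularEpi_of_comp {X Y Z : C} (f : X ⟶ Y) (g : Y ⟶ Z) [Epi f]
    (h : Nonempty (RegularEpi (f ≫ g))) : Nonempty (RegularEpi g) := by
  obtain ⟨r⟩ := h
  refine ⟨⟨r.W, r.left ≫ f, r.right ≫ f, by simpa using r.w, ?_⟩⟩
  refine Cofork.IsColimit.mk' _ (fun s => ?_)
  have hs : r.left ≫ (f ≫ s.π) = r.right ≫ (f ≫ s.π) := by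
    simpa using s.condition
  refine ⟨Cofork.IsColimit.desc r.isColimit (f ≫ s.π) hs, ?_, ?_⟩
  · have := Cofork.IsColimit.π_desc' r.isColimit (f ≫ s.π) hs
    rw [← cancel_epi f]
    simpa using this
  · intro k hk
    apply Cofork.IsColimit.hom_ext r.isColimit
    rw [Cofork.IsColimit.π_desc' r.isColimit (f ≫ s.π) hs]
    have hk' : g ≫ k = s.π := hk
    simp [hk']

end helpers

/-- Proposition 4.4: the base object `L` is a module over the semigroup
`A` via the action `p ∘ n₂ : A ⊗ L ⟶ L`: this action is associative, a regular
epimorphism, and non-degenerate on the left with respect to `𝒴`. -/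
theorem base_object_is_module
    [HasCoequalizers C]
    (presL : ∀ X : C, PreservesColimitsOfShape WalkingParallelPair (tensorLeft X))
    (presR : ∀ X : C, PreservesColimitsOfShape WalkingParallelPair (tensorRight X))
    (regcomp : ∀ {X Y Z : C} (f : X ⟶ Y) (g : Y ⟶ Z),
      Nonempty (RegularEpi f) → Nonempty (RegularEpi g) → Nonempty (RegularEpi (f ≫ g)))
    {A : C} {𝒴 : Set C} (S : RWMB A 𝒴)
    (hmreg : Nonempty (RegularEpi S.m))
    (L : C) (p : A ⟶ L)
    (hpc : S.piL1 ≫ p = S.piBarR1c ≫ p)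
    (hpu : ∀ {X : C} (h : A ⟶ X), S.piL1 ≫ h = S.piBarR1c ≫ h →
      ∃! k : L ⟶ X, p ≫ k = h)
    (memL : L ∈ 𝒴)
    (n₁ : L ⊗ A ⟶ A) (hn₁ : (p ▷ A) ≫ n₁ = S.piL1)
    (hndn₁ : NdRightOn n₁ 𝒴)
    (n₂ : A ⊗ L ⟶ A) (hn₂ : (A ◁ p) ≫ n₂ = S.piL2) :
    -- the action `p ∘ n₂` is associative ...
    ((A ◁ (n₂ ≫ p)) ≫ (n₂ ≫ p) = (α_ A A L).inv ≫ (S.m ▷ L) ≫ (n₂ ≫ p)) ∧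
    -- ... a regular epimorphism ...
    Nonempty (RegularEpi (n₂ ≫ p)) ∧
    -- ... and non-degenerate on the left with respect to `𝒴`
    NdLeftOn (n₂ ≫ p) 𝒴 := by
  have hpreg : Nonempty (RegularEpi p) := by
    refine ⟨⟨A ⊗ A, S.piL1, S.piBarR1c, hpc, ?_⟩⟩
    refine Cofork.IsColimit.mk' _ (fun s => ?_)
    have hex := hpu s.π s.condition
    refine ⟨hex.choose, hex.choose_spec.1, fun {k} hk => hex.choose_spec.2 k hk⟩
  have epL : ∀ X : C, Epi (X ◁ p) := fun X => epi_whiskerLeft hpreg X (presL X)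
  have epR : ∀ X : C, Epi (p ▷ X) := fun X => epi_whiskerRight hpreg X (presR X)
  have emR : ∀ X : C, Epi (S.m ▷ X) := fun X => epi_whiskerRight hmreg X (presR X)
  have hass := S.m_assoc
  have hPhi : ∀ {Z : C} (f : Z ⟶ A), (A ◁ (f ▷ A ≫ S.piL1)) ≫ S.m
      = S.Phi (A ◁ f ≫ S.m ≫ S.j) := by
    intro Z f
    rw [MonoidalCategory.whiskerLeft_comp, assoc, S.ax8', S.Phi_nat]
  -- the key identity
  have key : S.piL2 ≫ p = S.m ≫ p := by
    apply nd_cancel_right hndn₁ S.memI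
    simp only [comp_whiskerRight, assoc, hn₁]
    apply nd_cancel S.ndl S.memI
    rw [hPhi, hPhi]
    have e := S.piL2_lin
    rw [reassoc_of% e, S.piL2_j, reassoc_of% hass]
  have hact : (A ◁ p) ≫ n₂ ≫ p = S.m ≫ p := by
    rw [reassoc_of% hn₂, key]
  have hactj : (A ◁ p) ≫ n₂ ≫ S.j = S.m ≫ S.j := by
    rw [reassoc_of% hn₂, S.piL2_j]
  -- a general form of associativity
  have hgen : ∀ {W : C} (k : A ⊗ L ⟶ W) (k' : A ⟶ W), (A ◁ p) ≫ k = S.m ≫ k' →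
      (A ◁ (n₂ ≫ p)) ≫ k = (α_ A A L).inv ≫ (S.m ▷ L) ≫ k := by
    intro W k k' hk
    haveI : Epi (A ◁ (A ◁ p)) := by
      haveI := epL (A ⊗ A)
      have : A ◁ (A ◁ p) = (α_ A A A).inv ≫ ((A ⊗ A) ◁ p) ≫ (α_ A A L).hom := by simp
      rw [this]
      infer_instance
    rw [← cancel_epi (A ◁ (A ◁ p)), ← MonoidalCategory.whiskerLeft_comp_assoc, hact,
      associator_inv_naturality_right_assoc, whisker_exchange_assoc, hk,
      MonoidalCategory.whiskerLeft_comp, assoc, hk, reassoc_of% hass]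
  refine ⟨hgen _ _ hact, ?_, ?_⟩
  · haveI := epL A
    apply regularEpi_of_comp (A ◁ p)
    rw [hact]
    exact regcomp _ _ hmreg hpreg
  · have hn : (A ◁ n₁) ≫ S.m = S.Phi (n₂ ≫ S.j) := by
      haveI : Epi (A ◁ (p ▷ A)) := by
        haveI := epL (A ⊗ A)
        have : A ◁ (p ▷ A) = (A ◁ (β_ A A).inv) ≫ (A ◁ (A ◁ p)) ≫ (A ◁ (β_ A L).hom) := by
          rw [← MonoidalCategory.whiskerLeft_comp, ← MonoidalCategory.whiskerLeft_comp,
            BraidedCategory.braiding_naturality_right, Iso.inv_hom_id_assoc]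
        rw [this]
        have : A ◁ (A ◁ p) = (α_ A A A).inv ≫ ((A ⊗ A) ◁ p) ≫ (α_ A A L).hom := by simp
        rw [this]
        infer_instance
      rw [← cancel_epi (A ◁ (p ▷ A)), ← MonoidalCategory.whiskerLeft_comp_assoc, hn₁, S.ax8',
        ← S.Phi_nat, hactj]
    intro X Y hY g h hgh
    simp only at hgh
    have hu : ∀ g : X ⟶ L ⊗ Y, (α_ A A X).inv ≫ (S.m ▷ X) ≫
        ((A ◁ g) ≫ (α_ A L Y).inv ≫ ((n₂ ≫ S.j) ▷ Y) ≫ (λ_ Y).hom)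
        = (A ◁ ((A ◁ g) ≫ (α_ A L Y).inv ≫ ((n₂ ≫ p) ▷ Y))) ≫ (α_ A L Y).inv ≫
          ((n₂ ≫ S.j) ▷ Y) ≫ (λ_ Y).hom := by
      intro g
      have e := congrArg (fun k => k ▷ Y) (hgen _ _ hactj)
      rw [← whisker_exchange_assoc, ← associator_inv_naturality_right_assoc]
      simp only [MonoidalCategory.whiskerLeft_comp, assoc]
      congr 1
      have e' : (A ◁ ((n₂ ≫ p) ▷ Y)) ≫ (α_ A L Y).inv ≫ ((n₂ ≫ S.j) ▷ Y)
          = (α_ A (A ⊗ L) Y).inv ≫ (((A ◁ (n₂ ≫ p)) ≫ n₂ ≫ S.j) ▷ Y) := by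
        simp
      rw [reassoc_of% e', hgen _ _ hactj]
      monoidal
    have hueq : (A ◁ g) ≫ (α_ A L Y).inv ≫ ((n₂ ≫ S.j) ▷ Y) ≫ (λ_ Y).hom
        = (A ◁ h) ≫ (α_ A L Y).inv ≫ ((n₂ ≫ S.j) ▷ Y) ≫ (λ_ Y).hom := by
      haveI := emR X
      rw [← cancel_epi (S.m ▷ X), ← cancel_epi (α_ A A X).inv, hu, hu, hgh]
    apply hndn₁ X Y hY
    apply S.ndl _ Y hY
    show _ = _
    simp only
    rw [S.nd_formula _ _ hn, S.nd_formula _ _ hn, hueq]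


end WeakMultiplierBimonoid
end

section
/- Under the standing assumptions of Section 4 of the paper, for any modules (V, v) and (W, w) over the semigroup A, there exists a morphism b⁰ : A⊗V⊗W → V⊗W, uniquely determined by b⁰∘(1⊗((v⊗w)∘(1⊗c⊗1))) = (v⊗w)∘(1⊗c⊗1)∘(d₁⊗1⊗1) : A⊗A⊗A⊗V⊗W → V⊗W, which is an associative A-action (b⁰∘(m⊗1⊗1) = b⁰∘(1⊗b⁰)) and satisfies: s∘b⁰ = b⁰ = b⁰∘(1⊗s), and (v⊗w)∘(1⊗c⊗1)∘(d₂⊗1⊗1) = (v⊗w)∘(1⊗c⊗1)∘(1⊗1⊗b⁰) : A⊗A⊗A⊗V⊗W → V⊗W. -/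
open CategoryTheory Category MonoidalCategory Limits

universe v u

namespace WeakMultiplierBimonoid

variable {C : Type u} [Category.{v} C] [MonoidalCategory C] [BraidedCategory C]

/-- A module over the semigroup `(A, m)`, relative to the class `𝒴`: an object of `𝒴`
with an associative action which is a regular epimorphism and non-degenerate on the
left with respect to `𝒴`. -/
structure AModule (A : C) (m : A ⊗ A ⟶ A) (𝒴 : Set C) where
  V : C
  mem : V ∈ 𝒴
  act : A ⊗ V ⟶ V
  assoc : (A ◁ act) ≫ act = (α_ A A V).inv ≫ (m ▷ V) ≫ act
  regEpi : Nonempty (RegularEpi act)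
  nd : NdLeftOn act 𝒴

/-- The canonical idempotent
`s := (1 ⊗ ε ⊗ 1) ∘ (1 ⊗ μ ⊗ 1) ∘ (τ̄_V ⊗ τ_W) : V ⊗ W ⟶ V ⊗ W`. -/
def sIdem {L : C} (μ : L ⊗ L ⟶ L) (ε : L ⟶ 𝟙_ C) {V W : C}
    (τbV : V ⟶ V ⊗ L) (τW : W ⟶ L ⊗ W) : V ⊗ W ⟶ V ⊗ W :=
  (τbV ▷ W) ≫ ((V ⊗ L) ◁ τW) ≫ (α_ V L (L ⊗ W)).hom ≫ (V ◁ (α_ L L W).inv) ≫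
    (V ◁ (μ ▷ W)) ≫ (V ◁ (ε ▷ W)) ≫ (V ◁ (λ_ W).hom)

/-- `(v ⊗ w) ∘ (1 ⊗ c ⊗ 1) : (A ⊗ A) ⊗ (V ⊗ W) ⟶ V ⊗ W`, where the middle braiding
`c : A ⊗ V ⟶ V ⊗ A` interchanges the second `A` factor with `V`. -/
def actPair {A V W : C} (v : A ⊗ V ⟶ V) (w : A ⊗ W ⟶ W) :
    (A ⊗ A) ⊗ (V ⊗ W) ⟶ V ⊗ W :=
  (α_ A A (V ⊗ W)).hom ≫ (A ◁ (α_ A V W).inv) ≫ (A ◁ ((β_ A V).hom ▷ W)) ≫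
    (A ◁ (α_ V A W).hom) ≫ (α_ A V (A ⊗ W)).inv ≫ (v ▷ (A ⊗ W)) ≫ (V ◁ w)

/-- `d₁ := (m ⊗ 1) ∘ (1 ⊗ c) ∘ (t₁ ⊗ 1) ∘ (1 ⊗ c⁻¹) : A ⊗ A ⊗ A ⟶ A ⊗ A`. -/
def dOne {A : C} (m : A ⊗ A ⟶ A) (t₁ : A ⊗ A ⟶ A ⊗ A) : A ⊗ (A ⊗ A) ⟶ A ⊗ A :=
  (A ◁ (β_ A A).inv) ≫ wl t₁ ≫ (A ◁ (β_ A A).hom) ≫ ml m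

/-- `d₂ := (1 ⊗ m) ∘ (c ⊗ 1) ∘ (1 ⊗ t₂) ∘ (c⁻¹ ⊗ 1) : A ⊗ A ⊗ A ⟶ A ⊗ A`. -/
def dTwo {A : C} (m : A ⊗ A ⟶ A) (t₂ : A ⊗ A ⟶ A ⊗ A) : A ⊗ (A ⊗ A) ⟶ A ⊗ A :=
  wl (β_ A A).inv ≫ (A ◁ t₂) ≫ wl (β_ A A).hom ≫ (A ◁ m)

set_option linter.unusedSimpArgs false

/-! ### Tail operators: a strict calculus on right-nested tensor words -/

section Tail

set_option linter.unusedSectionVars false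

def T22 {A B D E : C} (f : A ⊗ B ⟶ D ⊗ E) (Y : C) : A ⊗ (B ⊗ Y) ⟶ D ⊗ (E ⊗ Y) :=
  (α_ A B Y).inv ≫ (f ▷ Y) ≫ (α_ D E Y).hom

def T21 {A B D : C} (f : A ⊗ B ⟶ D) (Y : C) : A ⊗ (B ⊗ Y) ⟶ D ⊗ Y :=
  (α_ A B Y).inv ≫ (f ▷ Y)

def T12 {A D E : C} (f : A ⟶ D ⊗ E) (Y : C) : A ⊗ Y ⟶ D ⊗ (E ⊗ Y) :=
  (f ▷ Y) ≫ (α_ D E Y).hom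

def T10 {A : C} (f : A ⟶ 𝟙_ C) (Y : C) : A ⊗ Y ⟶ Y :=
  (f ▷ Y) ≫ (λ_ Y).hom

def T33 {A : C} (f : A ⊗ (A ⊗ A) ⟶ A ⊗ (A ⊗ A)) (Y : C) :
    A ⊗ (A ⊗ (A ⊗ Y)) ⟶ A ⊗ (A ⊗ (A ⊗ Y)) :=
  (A ◁ (α_ A A Y).inv) ≫ (α_ A (A ⊗ A) Y).inv ≫ (f ▷ Y) ≫ (α_ A (A ⊗ A) Y).hom ≫
    (A ◁ (α_ A A Y).hom)

def T32 {A : C} (f : A ⊗ (A ⊗ A) ⟶ A ⊗ A) (Y : C) :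
    A ⊗ (A ⊗ (A ⊗ Y)) ⟶ A ⊗ (A ⊗ Y) :=
  (A ◁ (α_ A A Y).inv) ≫ (α_ A (A ⊗ A) Y).inv ≫ (f ▷ Y) ≫ (α_ A A Y).hom

def T31 {A : C} (f : A ⊗ (A ⊗ A) ⟶ A) (Y : C) :
    A ⊗ (A ⊗ (A ⊗ Y)) ⟶ A ⊗ Y :=
  (A ◁ (α_ A A Y).inv) ≫ (α_ A (A ⊗ A) Y).inv ≫ (f ▷ Y)

theorem gath (X : C) {P Q R : C} (f : P ⟶ Q) (g : Q ⟶ R) : X ◁ f ≫ X ◁ g = X ◁ (f ≫ g) :=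
  (MonoidalCategory.whiskerLeft_comp X f g).symm

theorem gath' (X : C) {P Q R Z : C} (f : P ⟶ Q) (g : Q ⟶ R) (h : X ⊗ R ⟶ Z) :
    X ◁ f ≫ X ◁ g ≫ h = X ◁ (f ≫ g) ≫ h := by
  simp

theorem n22 {A B D E Y Y' : C} (f : A ⊗ B ⟶ D ⊗ E) (g : Y ⟶ Y') :
    T22 f Y ≫ D ◁ (E ◁ g) = A ◁ (B ◁ g) ≫ T22 f Y' := by
  have h : A ◁ (B ◁ g) = (α_ A B Y).inv ≫ (A ⊗ B) ◁ g ≫ (α_ A B Y').hom := by simp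
  have h' : D ◁ (E ◁ g) = (α_ D E Y).inv ≫ (D ⊗ E) ◁ g ≫ (α_ D E Y').hom := by simp
  rw [h, h']
  simp only [T22, Category.assoc, Iso.hom_inv_id_assoc, Iso.inv_hom_id_assoc,
    whisker_exchange_assoc]

theorem n22' {A B D E Y Y' Z : C} (f : A ⊗ B ⟶ D ⊗ E) (g : Y ⟶ Y') (h : D ⊗ (E ⊗ Y') ⟶ Z) :
    T22 f Y ≫ D ◁ (E ◁ g) ≫ h = A ◁ (B ◁ g) ≫ T22 f Y' ≫ h := by
  rw [← Category.assoc, n22, Category.assoc]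

theorem n22s {A B D E Y Y' Z : C} (f : A ⊗ B ⟶ D ⊗ E) (g : Y ⟶ Y') (h : E ⊗ Y' ⟶ Z) :
    T22 f Y ≫ D ◁ (E ◁ g ≫ h) = A ◁ (B ◁ g) ≫ T22 f Y' ≫ D ◁ h := by
  rw [MonoidalCategory.whiskerLeft_comp, n22']

theorem n22s' {A B D E Y Y' Z Z' : C} (f : A ⊗ B ⟶ D ⊗ E) (g : Y ⟶ Y') (h : E ⊗ Y' ⟶ Z)
    (k : D ⊗ Z ⟶ Z') :
    T22 f Y ≫ D ◁ (E ◁ g ≫ h) ≫ k = A ◁ (B ◁ g) ≫ T22 f Y' ≫ D ◁ h ≫ k := by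
  rw [MonoidalCategory.whiskerLeft_comp, Category.assoc, n22']

theorem n21 {A B D Y Y' : C} (f : A ⊗ B ⟶ D) (g : Y ⟶ Y') :
    T21 f Y ≫ D ◁ g = A ◁ (B ◁ g) ≫ T21 f Y' := by
  have h : A ◁ (B ◁ g) = (α_ A B Y).inv ≫ (A ⊗ B) ◁ g ≫ (α_ A B Y').hom := by simp
  rw [h]
  simp only [T21, Category.assoc, Iso.hom_inv_id, Iso.hom_inv_id_assoc, whisker_exchange]

theorem n21' {A B D Y Y' Z : C} (f : A ⊗ B ⟶ D) (g : Y ⟶ Y') (h : D ⊗ Y' ⟶ Z) :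
    T21 f Y ≫ D ◁ g ≫ h = A ◁ (B ◁ g) ≫ T21 f Y' ≫ h := by
  rw [← Category.assoc, n21, Category.assoc]

theorem n12 {A D E Y Y' : C} (f : A ⟶ D ⊗ E) (g : Y ⟶ Y') :
    T12 f Y ≫ D ◁ (E ◁ g) = A ◁ g ≫ T12 f Y' := by
  simp [T12, whisker_exchange_assoc]

theorem n12' {A D E Y Y' Z : C} (f : A ⟶ D ⊗ E) (g : Y ⟶ Y') (h : D ⊗ (E ⊗ Y') ⟶ Z) :
    T12 f Y ≫ D ◁ (E ◁ g) ≫ h = A ◁ g ≫ T12 f Y' ≫ h := by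
  rw [← Category.assoc, n12, Category.assoc]

theorem n12s {A D E Y Y' Z : C} (f : A ⟶ D ⊗ E) (g : Y ⟶ Y') (h : E ⊗ Y' ⟶ Z) :
    T12 f Y ≫ D ◁ (E ◁ g ≫ h) = A ◁ g ≫ T12 f Y' ≫ D ◁ h := by
  rw [MonoidalCategory.whiskerLeft_comp, n12']

theorem n12s' {A D E Y Y' Z Z' : C} (f : A ⟶ D ⊗ E) (g : Y ⟶ Y') (h : E ⊗ Y' ⟶ Z)
    (k : D ⊗ Z ⟶ Z') :
    T12 f Y ≫ D ◁ (E ◁ g ≫ h) ≫ k = A ◁ g ≫ T12 f Y' ≫ D ◁ h ≫ k := by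
  rw [MonoidalCategory.whiskerLeft_comp, Category.assoc, n12']

theorem n11 {A D Y Y' : C} (f : A ⟶ D) (g : Y ⟶ Y') :
    f ▷ Y ≫ D ◁ g = A ◁ g ≫ f ▷ Y' := (whisker_exchange f g).symm

theorem n11' {A D Y Y' Z : C} (f : A ⟶ D) (g : Y ⟶ Y') (h : D ⊗ Y' ⟶ Z) :
    f ▷ Y ≫ D ◁ g ≫ h = A ◁ g ≫ f ▷ Y' ≫ h := (whisker_exchange_assoc f g h).symm

theorem n10 {A Y Y' : C} (f : A ⟶ 𝟙_ C) (g : Y ⟶ Y') :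
    T10 f Y ≫ g = A ◁ g ≫ T10 f Y' := by
  simp [T10, whisker_exchange_assoc]

theorem n10' {A Y Y' Z : C} (f : A ⟶ 𝟙_ C) (g : Y ⟶ Y') (h : Y' ⟶ Z) :
    T10 f Y ≫ g ≫ h = A ◁ g ≫ T10 f Y' ≫ h := by
  rw [← Category.assoc, n10, Category.assoc]

/-! Braid relations -/

theorem bbi (A B Y : C) : T22 (β_ A B).hom Y ≫ T22 (β_ A B).inv Y = 𝟙 _ := by
  simp [T22, ← comp_whiskerRight_assoc]

theorem bib (A B Y : C) : T22 (β_ A B).inv Y ≫ T22 (β_ A B).hom Y = 𝟙 _ := by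
  simp [T22, ← comp_whiskerRight_assoc]

theorem bm1 {A B D : C} (m : A ⊗ B ⟶ D) (E Y : C) :
    T21 m (E ⊗ Y) ≫ T22 (β_ D E).hom Y =
      A ◁ T22 (β_ B E).hom Y ≫ T22 (β_ A E).hom (B ⊗ Y) ≫ E ◁ T21 m Y := by
  have h := BraidedCategory.braiding_naturality_left m E
  rw [BraidedCategory.braiding_tensor_left_hom] at h
  calc _ = (α_ _ _ _).inv ≫ (α_ _ _ _).inv ≫ (m ▷ E ≫ (β_ D E).hom) ▷ Y ≫ (α_ _ _ _).hom := by
        simp only [T21, T22]; monoidal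
    _ = _ := by rw [h]; simp only [T21, T22]; monoidal

theorem bm2 {A B D : C} (m : A ⊗ B ⟶ D) (E Y : C) :
    E ◁ T21 m Y ≫ T22 (β_ E D).hom Y =
      T22 (β_ E A).hom (B ⊗ Y) ≫ A ◁ T22 (β_ E B).hom Y ≫ T21 m (E ⊗ Y) := by
  have h := BraidedCategory.braiding_naturality_right E m
  rw [BraidedCategory.braiding_tensor_right_hom] at h
  calc _ = E ◁ (α_ _ _ _).inv ≫ (α_ _ _ _).inv ≫ (E ◁ m ≫ (β_ E D).hom) ▷ Y ≫
        (α_ _ _ _).hom := by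
        simp only [T21, T22]; monoidal
    _ = _ := by rw [h]; simp only [T21, T22]; monoidal

theorem bm2' {A B D : C} (m : A ⊗ B ⟶ D) (E Y : C) :
    T22 (β_ E A).inv (B ⊗ Y) ≫ E ◁ T21 m Y =
      A ◁ T22 (β_ E B).hom Y ≫ T21 m (E ⊗ Y) ≫ T22 (β_ E D).inv Y := by
  have h := congrArg (fun z => T22 (β_ E A).inv (B ⊗ Y) ≫ z ≫ T22 (β_ E D).inv Y) (bm2 m E Y)
  simp only [Category.assoc, bbi, Category.comp_id] at h
  rw [h, ← Category.assoc, bib, Category.id_comp]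

theorem bf1 {A B D F : C} (f : A ⊗ B ⟶ D ⊗ F) (E Y : C) :
    T22 f (E ⊗ Y) ≫ D ◁ T22 (β_ F E).hom Y ≫ T22 (β_ D E).hom (F ⊗ Y) =
      A ◁ T22 (β_ B E).hom Y ≫ T22 (β_ A E).hom (B ⊗ Y) ≫ E ◁ T22 f Y := by
  have h := BraidedCategory.braiding_naturality_left f E
  simp only [BraidedCategory.braiding_tensor_left_hom] at h
  have h' := congrArg (fun z => (α_ A B _).inv ≫ (α_ _ _ _).inv ≫ z ▷ Y ≫ (α_ _ _ _).hom ≫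
    E ◁ (α_ _ _ _).hom) h
  refine Eq.trans ?_ (h'.trans ?_)
  · simp only [T22]; monoidal
  · simp only [T22]; monoidal

theorem bt1 {A D F : C} (f : A ⟶ D ⊗ F) (E Y : C) :
    T22 (β_ A E).hom Y ≫ E ◁ T12 f Y =
      T12 f (E ⊗ Y) ≫ D ◁ T22 (β_ F E).hom Y ≫ T22 (β_ D E).hom (F ⊗ Y) := by
  have h := BraidedCategory.braiding_naturality_left f E
  simp only [BraidedCategory.braiding_tensor_left_hom] at h
  have h' := congrArg (fun z => (α_ _ _ _).inv ≫ z ▷ Y ≫ (α_ _ _ _).hom ≫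
    E ◁ (α_ _ _ _).hom) h
  refine Eq.trans ?_ (h'.symm.trans ?_)
  · simp only [T22, T12]; monoidal
  · simp only [T22, T12]; monoidal

theorem bj1 {A : C} (f : A ⟶ 𝟙_ C) (E Y : C) :
    T22 (β_ A E).hom Y ≫ E ◁ T10 f Y = T10 f (E ⊗ Y) := by
  have h := BraidedCategory.braiding_naturality_left f E
  simp only [braiding_tensorUnit_left] at h
  have h' := congrArg (fun z => (α_ _ _ _).inv ≫ z ▷ Y ≫ (α_ _ _ _).hom ≫
    E ◁ (λ_ _).hom) h
  refine Eq.trans ?_ (h'.symm.trans ?_)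
  · simp only [T22, T10]; monoidal
  · simp only [T10]; monoidal

/-! Conversions -/

theorem T33_comp {A : C} (f g : A ⊗ (A ⊗ A) ⟶ A ⊗ (A ⊗ A)) (Y : C) :
    T33 (f ≫ g) Y = T33 f Y ≫ T33 g Y := by
  simp [T33]

theorem T32_comp {A : C} (f : A ⊗ (A ⊗ A) ⟶ A ⊗ (A ⊗ A)) (g : A ⊗ (A ⊗ A) ⟶ A ⊗ A) (Y : C) :
    T32 (f ≫ g) Y = T33 f Y ≫ T32 g Y := by
  simp [T33, T32]

theorem T31_comp {A : C} (f : A ⊗ (A ⊗ A) ⟶ A ⊗ (A ⊗ A)) (g : A ⊗ (A ⊗ A) ⟶ A) (Y : C) :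
    T31 (f ≫ g) Y = T33 f Y ≫ T31 g Y := by
  simp [T33, T31]

theorem T31_comp' {A : C} (f : A ⊗ (A ⊗ A) ⟶ A ⊗ A) (g : A ⊗ A ⟶ A) (Y : C) :
    T31 (f ≫ g) Y = T32 f Y ≫ T21 g Y := by
  simp [T32, T31, T21]

theorem T33_wl {A : C} (f : A ⊗ A ⟶ A ⊗ A) (Y : C) : T33 (wl f) Y = T22 f (A ⊗ Y) := by
  simp only [T33, wl, T22]; monoidal

theorem T33_l {A : C} (f : A ⊗ A ⟶ A ⊗ A) (Y : C) : T33 (A ◁ f) Y = A ◁ T22 f Y := by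
  simp only [T33, T22]; monoidal

theorem T32_ml {A : C} (f : A ⊗ A ⟶ A) (Y : C) : T32 (ml f) Y = T21 f (A ⊗ Y) := by
  simp only [T32, ml, T21]; monoidal

theorem T32_l {A : C} (f : A ⊗ A ⟶ A) (Y : C) : T32 (A ◁ f) Y = A ◁ T21 f Y := by
  simp only [T32, T21]; monoidal

theorem T21_j {A B : C} (j : A ⟶ 𝟙_ C) (Y : C) :
    T21 (j ▷ B ≫ (λ_ B).hom) Y = T10 j (B ⊗ Y) := by
  simp only [T21, T10]; monoidal

theorem T21_jr {A B : C} (j : A ⟶ 𝟙_ C) (Y : C) :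
    T21 (B ◁ j ≫ (ρ_ B).hom) Y = B ◁ T10 j Y := by
  simp only [T21, T10]; monoidal

theorem T21_comp {A B D E F : C} (f : A ⊗ B ⟶ D ⊗ E) (g : D ⊗ E ⟶ F) (Y : C) :
    T21 (f ≫ g) Y = T22 f Y ≫ T21 g Y := by
  simp [T21, T22]

theorem T21_comp1 {A B D E : C} (f : A ⊗ B ⟶ D) (g : D ⟶ E) (Y : C) :
    T21 (f ≫ g) Y = T21 f Y ≫ g ▷ Y := by
  simp [T21]

end Tail

namespace RWMB

section Words

variable {A : C} {𝒴 : Set C} (S : RWMB A 𝒴)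

local notation "bb" => T22 (Iso.hom (BraidedCategory.braiding _ _)) _
local notation "bi" => T22 (Iso.inv (BraidedCategory.braiding _ _)) _
local notation "mm" => T21 (RWMB.m S) _
local notation "jj" => T10 (RWMB.j S) _
local notation "tt₁" => T22 (RWMB.t₁ S) _
local notation "tt₂" => T22 (RWMB.t₂ S) _
local notation "tt₄" => T22 (RWMB.t₄ S) _
local notation "ee₁" => T22 (RWMB.e₁ S) _
local notation "ee₂" => T22 (RWMB.e₂ S) _

theorem wm1 (Y : C) : T21 S.m Y = tt₁ ≫ jj := by
  conv_lhs => rw [S.hm₁]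
  rw [T21_comp, T21_j]

theorem wm4 (Y : C) : T21 S.m Y = bb ≫ tt₄ ≫ A ◁ jj := by
  conv_lhs => rw [S.hm₄]
  rw [T21_comp, T21_comp, T21_jr]

theorem w12 (Y : C) : A ◁ T22 S.t₁ Y ≫ mm = tt₂ ≫ A ◁ mm := by
  simpa only [T32_comp, T33_comp, T33_wl, T33_l, T32_ml, T32_l] using congrArg (T32 · Y) S.hc12

theorem w14 (Y : C) : A ◁ T22 S.t₁ Y ≫ bb ≫ mm = tt₄ ≫ A ◁ mm := by
  simpa only [T32_comp, T33_comp, T33_wl, T33_l, T32_ml, T32_l] using congrArg (T32 · Y) S.hc14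

theorem wa1 (Y : C) :
    A ◁ T22 S.t₁ Y ≫ bb ≫ A ◁ tt₁ ≫ bi ≫ tt₁ = tt₁ ≫ A ◁ tt₁ := by
  simpa only [T33_comp, T33_wl, T33_l] using congrArg (T33 · Y) S.ax1

theorem T22_comp {A B D E F G : C} (f : A ⊗ B ⟶ D ⊗ E) (g : D ⊗ E ⟶ F ⊗ G) (Y : C) :
    T22 (f ≫ g) Y = T22 f Y ≫ T22 g Y := by
  simp [T22]

theorem wa3 (Y : C) : T22 S.t₁ Y ≫ ee₁ = tt₁ := by
  rw [← T22_comp, S.ax3]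

theorem wa4 (Y : C) : A ◁ T22 S.e₁ Y ≫ A ◁ bi ≫ tt₁ ≫ A ◁ bb ≫ mm =
    A ◁ bi ≫ tt₁ ≫ A ◁ bb ≫ mm := by
  simpa only [T32_comp, T33_comp, T33_wl, T33_l, T32_ml, T32_l] using congrArg (T32 · Y) S.ax4

theorem wa5 (Y : C) : A ◁ T22 S.t₁ Y ≫ ee₁ = ee₁ ≫ A ◁ tt₁ := by
  simpa only [T33_comp, T33_wl, T33_l] using congrArg (T33 · Y) S.ax5

theorem wa6 (Y : C) : T22 S.t₁ (A ⊗ Y) ≫ A ◁ ee₁ = A ◁ bi ≫ ee₁ ≫ A ◁ bb ≫ tt₁ := by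
  simpa only [T33_comp, T33_wl, T33_l] using congrArg (T33 · Y) S.ax6

theorem wa8 (Y : C) : T22 S.t₁ (A ⊗ Y) ≫ A ◁ bb ≫ mm ≫ jj =
    A ◁ bb ≫ A ◁ ee₁ ≫ A ◁ jj ≫ mm := by
  simpa only [T31_comp, T31_comp', T32_comp, T33_comp, T33_wl, T33_l, T32_ml, T32_l, T21_j]
    using congrArg (T31 · Y) S.ax8

theorem wec (Y : C) : A ◁ A ◁ T22 S.e₁ Y ≫ A ◁ bb ≫ mm ≫ A ◁ mm =
    ee₂ ≫ A ◁ bb ≫ mm ≫ A ◁ mm := by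
  have h := congrArg (fun z => A ◁ A ◁ (α_ A A Y).inv ≫ (α_ A A ((A ⊗ A) ⊗ Y)).inv ≫
    (α_ (A ⊗ A) (A ⊗ A) Y).inv ≫ z ▷ Y ≫ (α_ A A Y).hom) S.hecomp
  refine Eq.trans ?_ (h.trans ?_)
  · simp only [T22, T21, midSw]; monoidal
  · simp only [T22, T21, midSw]; monoidal

/-- multiplicativity of the comultiplication in short form -/
theorem conj1 (f : A ⊗ A ⟶ A ⊗ A) (Y : C) :
    T22 (β_ A A).hom (A ⊗ Y) ≫ A ◁ T22 f Y ≫ bi =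
      A ◁ bi ≫ T22 f _ ≫ A ◁ bb := by
  have h := congrArg (fun z => A ◁ T22 (β_ A A).inv Y ≫ z ≫ T22 (β_ A A).inv (A ⊗ Y)) (bf1 f A Y)
  simp only [Category.assoc, bbi, Category.comp_id] at h
  rw [h, ← Category.assoc (A ◁ T22 (β_ A A).inv Y), gath, bib]
  simp only [MonoidalCategory.whiskerLeft_id, Category.id_comp]

theorem sfus (Y : C) : T21 S.m (A ⊗ Y) ≫ tt₁ =
    A ◁ tt₁ ≫ A ◁ bi ≫ tt₁ ≫ A ◁ bb ≫ mm := by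
  calc _ = (tt₁ ≫ A ◁ tt₁) ≫ jj := by rw [wm1]; simp only [Category.assoc, gath, gath', n22, n22', n22s, n22s', n21, n21', n11, n11', n10, n10']
    _ = A ◁ tt₁ ≫ (bb ≫ A ◁ tt₁ ≫ bi) ≫ tt₁ ≫ jj := by
      rw [← wa1]; simp only [Category.assoc]
    _ = _ := by rw [conj1, ← wm1]; simp only [Category.assoc, gath, gath', n22, n22', n22s, n22s', n21, n21', n11, n11', n10, n10']

theorem wa8' (Y : C) : A ◁ T22 (β_ A A).inv Y ≫ tt₁ ≫ A ◁ bb ≫ mm ≫ jj =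
    A ◁ ee₁ ≫ A ◁ jj ≫ mm := by
  rw [wa8, ← Category.assoc, gath, bib]
  simp only [MonoidalCategory.whiskerLeft_id, Category.id_comp]

theorem massoc (Y : C) : T21 S.m (A ⊗ Y) ≫ mm = A ◁ mm ≫ mm := by
  calc _ = (mm ≫ tt₁) ≫ jj := by rw [wm1 S Y]; simp only [Category.assoc, gath, gath', n22, n22', n22s, n22s', n21, n21', n11, n11', n10, n10']
    _ = A ◁ tt₁ ≫ (A ◁ bi ≫ tt₁ ≫ A ◁ bb ≫ mm ≫ jj) := by
      rw [sfus]; simp only [Category.assoc]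
    _ = A ◁ ((tt₁ ≫ ee₁) ≫ jj) ≫ mm := by rw [wa8']; simp only [Category.assoc, gath, gath', n22, n22', n22s, n22s', n21, n21', n11, n11', n10, n10']
    _ = _ := by rw [wa3, ← wm1]

/-- right linearity of `d₁` in the first leg -/
theorem rl1 (Y : C) : (A ◁ T22 (β_ A A).inv (A ⊗ Y) ≫ tt₁ ≫ A ◁ bb ≫ mm) ≫ A ◁ bb ≫ mm =
    A ◁ A ◁ bb ≫ A ◁ mm ≫ A ◁ bi ≫ tt₁ ≫ A ◁ bb ≫ mm := by
  calc _ = A ◁ bi ≫ tt₁ ≫ A ◁ bb ≫ A ◁ A ◁ bb ≫ (mm ≫ mm) := by simp only [Category.assoc, gath, gath', n22, n22', n22s, n22s', n21, n21', n11, n11', n10, n10']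
    _ = A ◁ bi ≫ tt₁ ≫ A ◁ (bb ≫ A ◁ bb ≫ mm) ≫ mm := by rw [massoc]; simp only [Category.assoc, gath, gath', n22, n22', n22s, n22s', n21, n21', n11, n11', n10, n10']
    _ = A ◁ (bi ≫ A ◁ mm) ≫ tt₁ ≫ A ◁ bb ≫ mm := by rw [← bm2]; simp only [Category.assoc, gath, gath', n22, n22', n22s, n22s', n21, n21', n11, n11', n10, n10']
    _ = _ := by rw [bm2']; simp only [Category.assoc, gath, gath', n22, n22', n22s, n22s', n21, n21', n11, n11', n10, n10']

/-- `d₁ (1 ⊗ d₁) = d₁ (m ⊗ 1 ⊗ 1)` -/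
theorem d1assoc (Y : C) :
    A ◁ (A ◁ T22 (β_ A A).inv Y ≫ tt₁ ≫ A ◁ bb ≫ mm) ≫ (A ◁ bi ≫ tt₁ ≫ A ◁ bb ≫ mm) =
      mm ≫ A ◁ bi ≫ tt₁ ≫ A ◁ bb ≫ mm := by
  symm
  calc _ = A ◁ A ◁ bi ≫ (mm ≫ tt₁) ≫ A ◁ bb ≫ mm := by simp only [Category.assoc, gath, gath', n22, n22', n22s, n22s', n21, n21', n11, n11', n10, n10']
    _ = A ◁ A ◁ bi ≫ A ◁ tt₁ ≫ ((A ◁ bi ≫ tt₁ ≫ A ◁ bb ≫ mm) ≫ A ◁ bb ≫ mm) := by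
      rw [sfus]; simp only [Category.assoc]
    _ = _ := by rw [rl1]; simp only [Category.assoc, gath, gath', n22, n22', n22s, n22s', n21, n21', n11, n11', n10, n10']

/-- `((x ⊗ y) Δ(a)) (b ⊗ c) = (x ⊗ y) (Δ(a) (b ⊗ c))` -/
theorem d12 (Y : C) :
    A ◁ A ◁ (A ◁ T22 (β_ A A).inv Y ≫ tt₁ ≫ A ◁ bb ≫ mm) ≫ (A ◁ bb ≫ mm ≫ A ◁ mm) =
      (bi ≫ A ◁ tt₂ ≫ bb ≫ A ◁ mm) ≫ (A ◁ bb ≫ mm ≫ A ◁ mm) := by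
  symm
  calc _ = bi ≫ A ◁ tt₂ ≫ bb ≫ A ◁ (mm ≫ bb) ≫ mm ≫ A ◁ mm := by simp only [Category.assoc, gath, gath', n22, n22', n22s, n22s', n21, n21', n11, n11', n10, n10']
    _ = bi ≫ A ◁ tt₂ ≫ bb ≫ A ◁ (A ◁ bb ≫ bb) ≫ mm ≫ A ◁ (mm ≫ mm) := by
      rw [bm1]; simp only [Category.assoc, gath, gath', n22, n22', n22s, n22s', n21, n21', n11, n11', n10, n10']
    _ = bi ≫ A ◁ tt₂ ≫ bb ≫ A ◁ A ◁ (bb ≫ A ◁ mm) ≫ A ◁ bb ≫ mm ≫ A ◁ mm := by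
      rw [massoc]; simp only [Category.assoc, gath, gath', n22, n22', n22s, n22s', n21, n21', n11, n11', n10, n10']
    _ = bi ≫ A ◁ tt₂ ≫ bb ≫ A ◁ A ◁ (((A ◁ bi ≫ A ◁ bb) ≫ bb) ≫ A ◁ mm) ≫
        A ◁ bb ≫ mm ≫ A ◁ mm := by
      rw [gath, bib, MonoidalCategory.whiskerLeft_id, Category.id_comp]
    _ = bi ≫ A ◁ tt₂ ≫ bb ≫ A ◁ A ◁ (A ◁ bi ≫ (A ◁ bb ≫ bb ≫ A ◁ mm)) ≫
        A ◁ bb ≫ mm ≫ A ◁ mm := by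
      simp only [Category.assoc]
    _ = A ◁ A ◁ A ◁ bi ≫ bi ≫ A ◁ (tt₂ ≫ A ◁ mm) ≫ bb ≫ A ◁ A ◁ bb ≫
        A ◁ bb ≫ mm ≫ A ◁ mm := by
      rw [← bm1]; simp only [Category.assoc, gath, gath', n22, n22', n22s, n22s', n21, n21', n11, n11', n10, n10']
    _ = A ◁ A ◁ A ◁ bi ≫ bi ≫ A ◁ A ◁ tt₁ ≫ (A ◁ mm ≫ bb) ≫ A ◁ A ◁ bb ≫
        A ◁ bb ≫ mm ≫ A ◁ mm := by
      rw [← w12]; simp only [Category.assoc, gath, gath', n22, n22', n22s, n22s', n21, n21', n11, n11', n10, n10']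
    _ = A ◁ A ◁ A ◁ bi ≫ A ◁ A ◁ tt₁ ≫ (bi ≫ bb) ≫ A ◁ bb ≫ mm ≫ A ◁ A ◁ bb ≫
        A ◁ bb ≫ mm ≫ A ◁ mm := by
      rw [bm2]; simp only [Category.assoc, gath, gath', n22, n22', n22s, n22s', n21, n21', n11, n11', n10, n10']
    _ = A ◁ A ◁ A ◁ bi ≫ A ◁ A ◁ tt₁ ≫ A ◁ (bb ≫ A ◁ A ◁ bb ≫ A ◁ bb) ≫ (mm ≫ mm) ≫
        A ◁ mm := by
      rw [bib, Category.id_comp]; simp only [Category.assoc, gath, gath', n22, n22', n22s, n22s', n21, n21', n11, n11', n10, n10']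
    _ = A ◁ A ◁ A ◁ bi ≫ A ◁ A ◁ tt₁ ≫ A ◁ A ◁ A ◁ bb ≫ A ◁ (bb ≫ A ◁ bb ≫ mm) ≫ mm ≫
        A ◁ mm := by
      rw [massoc]; simp only [Category.assoc, gath, gath', n22, n22', n22s, n22s', n21, n21', n11, n11', n10, n10']
    _ = _ := by rw [← bm2]; simp only [Category.assoc, gath, gath', n22, n22', n22s, n22s', n21, n21', n11, n11', n10, n10']

end Words

end RWMB

/-! ### Non-degeneracy -/

section Nd

variable {𝒴 : Set C}

theorem nd_tail (hclosed : ∀ Y Y' : C, Y ∈ 𝒴 → Y' ∈ 𝒴 → (Y ⊗ Y') ∈ 𝒴)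
    {Z V W : C} (f : Z ⊗ V ⟶ W) (hf : NdLeftOn f 𝒴) {Y : C} (hY : Y ∈ 𝒴) :
    NdLeftOn (T21 f Y) 𝒴 := by
  intro X Y2 hY2 g g' h
  have h2 : g ≫ (α_ V Y Y2).hom = g' ≫ (α_ V Y Y2).hom := by
    apply hf X (Y ⊗ Y2) (hclosed _ _ hY hY2)
    have key : ∀ k : X ⟶ (V ⊗ Y) ⊗ Y2,
        Z ◁ (k ≫ (α_ V Y Y2).hom) ≫ (α_ Z V (Y ⊗ Y2)).inv ≫ f ▷ (Y ⊗ Y2) =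
          (Z ◁ k ≫ (α_ Z (V ⊗ Y) Y2).inv ≫ T21 f Y ▷ Y2) ≫ (α_ W Y Y2).hom := by
      intro k
      simp only [T21]; monoidal
    simp only [key]
    exact congrArg (· ≫ (α_ W Y Y2).hom) h
  exact (cancel_mono _).1 h2

theorem nd1 {Z V W : C} (f : Z ⊗ V ⟶ W) (hf : NdLeftOn f 𝒴) {X Y : C} (hY : Y ∈ 𝒴)
    (g g' : X ⟶ V ⊗ Y) (h : Z ◁ g ≫ T21 f Y = Z ◁ g' ≫ T21 f Y) : g = g' :=
  hf X Y hY h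

theorem nd2key {Z V W : C} (f : Z ⊗ V ⟶ W) (B : C) :
    T21 f B ≫ (β_ W B).hom = Z ◁ (β_ V B).hom ≫ T22 (β_ Z B).hom V ≫ B ◁ f := by
  have h := BraidedCategory.braiding_naturality_left f B
  rw [BraidedCategory.braiding_tensor_left_hom] at h
  rw [T21, Category.assoc, h]
  simp [T22]

theorem nd2 {Z V W : C} (f : Z ⊗ V ⟶ W) (hf : NdLeftOn f 𝒴) {X B : C} (hB : B ∈ 𝒴)
    (g g' : X ⟶ B ⊗ V)
    (h : Z ◁ g ≫ T22 (β_ Z B).hom V ≫ B ◁ f = Z ◁ g' ≫ T22 (β_ Z B).hom V ≫ B ◁ f) :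
    g = g' := by
  have key : ∀ k : X ⟶ B ⊗ V, Z ◁ (k ≫ (β_ V B).inv) ≫ T21 f B =
      (Z ◁ k ≫ T22 (β_ Z B).hom V ≫ B ◁ f) ≫ (β_ W B).inv := by
    intro k
    rw [Iso.eq_comp_inv, Category.assoc, nd2key]
    simp
  have h2 : g ≫ (β_ V B).inv = g' ≫ (β_ V B).inv := by
    apply nd1 f hf hB
    rw [key, key, h]
  exact (cancel_mono _).1 h2

theorem nd_pair {A B B' V V' : C} (f₁ : A ⊗ B ⟶ B') (h₁ : NdLeftOn f₁ 𝒴)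
    (f₂ : A ⊗ V ⟶ V') (h₂ : NdLeftOn f₂ 𝒴) (hB : B ∈ 𝒴) (hV' : V' ∈ 𝒴) {X : C}
    (g g' : X ⟶ B ⊗ V)
    (h : A ◁ A ◁ g ≫ A ◁ T22 (β_ A B).hom V ≫ T21 f₁ (A ⊗ V) ≫ B' ◁ f₂ =
      A ◁ A ◁ g' ≫ A ◁ T22 (β_ A B).hom V ≫ T21 f₁ (A ⊗ V) ≫ B' ◁ f₂) : g = g' := by
  apply nd2 f₂ h₂ hB
  apply nd1 f₁ h₁ hV'
  have key : ∀ k : X ⟶ B ⊗ V, A ◁ (A ◁ k ≫ T22 (β_ A B).hom V ≫ B ◁ f₂) ≫ T21 f₁ V' =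
      A ◁ A ◁ k ≫ A ◁ T22 (β_ A B).hom V ≫ T21 f₁ (A ⊗ V) ≫ B' ◁ f₂ := by
    intro k
    rw [n21]
    simp only [MonoidalCategory.whiskerLeft_comp, Category.assoc]
  rw [key, key, h]

theorem nd_right {A D : C} (m : A ⊗ A ⟶ D) (hm : NdRightOn m 𝒴) {X Q : C} (hQ : Q ∈ 𝒴)
    (g g' : X ⟶ Q ⊗ A)
    (h : g ▷ A ≫ (α_ Q A A).hom ≫ Q ◁ m = g' ▷ A ≫ (α_ Q A A).hom ≫ Q ◁ m) : g = g' := by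
  apply nd2 ((β_ A A).hom ≫ m) hm hQ
  have key : ∀ k : X ⟶ Q ⊗ A,
      A ◁ k ≫ T22 (β_ A Q).hom A ≫ Q ◁ ((β_ A A).hom ≫ m) =
        (β_ A X).hom ≫ k ▷ A ≫ (α_ Q A A).hom ≫ Q ◁ m := by
    intro k
    have hk := BraidedCategory.braiding_naturality_right A k
    rw [BraidedCategory.braiding_tensor_right_hom] at hk
    rw [← Category.assoc (β_ A X).hom, ← hk]
    simp [T22]
  rw [key, key, h]

end Nd

theorem T33_key {A : C} (G : A ⊗ (A ⊗ A) ⟶ A ⊗ (A ⊗ A)) (m : A ⊗ A ⟶ A) :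
    (G ≫ (α_ A A A).inv) ▷ A ≫ (α_ (A ⊗ A) A A).hom ≫ (A ⊗ A) ◁ m =
      ((α_ A (A ⊗ A) A).hom ≫ A ◁ (α_ A A A).hom ≫ A ◁ A ◁ A ◁ (ρ_ A).inv) ≫
      (T33 G (A ⊗ 𝟙_ C) ≫ A ◁ A ◁ T21 m (𝟙_ C)) ≫ (A ◁ A ◁ (ρ_ A).hom ≫ (α_ A A A).inv) := by
  simp only [T33, T21]; monoidal

theorem nd_T33 {A : C} {𝒴 : Set C} (m : A ⊗ A ⟶ A) (hm : NdRightOn m 𝒴) (hAA : (A ⊗ A) ∈ 𝒴)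
    (G G' : A ⊗ (A ⊗ A) ⟶ A ⊗ (A ⊗ A))
    (h : T33 G (A ⊗ 𝟙_ C) ≫ A ◁ A ◁ T21 m (𝟙_ C) =
      T33 G' (A ⊗ 𝟙_ C) ≫ A ◁ A ◁ T21 m (𝟙_ C)) : G = G' := by
  have h2 : G ≫ (α_ A A A).inv = G' ≫ (α_ A A A).inv := by
    apply nd_right m hm hAA
    rw [T33_key, T33_key, h]
  exact (cancel_mono _).1 h2

namespace RWMB

section Words

variable {A : C} {𝒴 : Set C} (S : RWMB A 𝒴)

local notation "bb" => T22 (Iso.hom (BraidedCategory.braiding _ _)) _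
local notation "bi" => T22 (Iso.inv (BraidedCategory.braiding _ _)) _
local notation "mm" => T21 (RWMB.m S) _
local notation "jj" => T10 (RWMB.j S) _
local notation "tt₁" => T22 (RWMB.t₁ S) _
local notation "tt₂" => T22 (RWMB.t₂ S) _
local notation "tt₄" => T22 (RWMB.t₄ S) _
local notation "ee₁" => T22 (RWMB.e₁ S) _
local notation "ee₂" => T22 (RWMB.e₂ S) _

theorem rlm1 (Y : C) : (A ◁ T22 (β_ A A).hom (A ⊗ (A ⊗ Y)) ≫ mm ≫ A ◁ mm) ≫ A ◁ bb ≫ mm =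
    A ◁ A ◁ A ◁ bb ≫ A ◁ A ◁ mm ≫ A ◁ bb ≫ mm ≫ A ◁ mm := by
  calc _ = A ◁ bb ≫ mm ≫ A ◁ (mm ≫ bb) ≫ mm := by simp only [Category.assoc, gath, gath', n22, n22', n22s, n22s', n21, n21', n11, n11', n10, n10']
    _ = A ◁ (bb ≫ A ◁ A ◁ bb ≫ A ◁ bb) ≫ (mm ≫ mm) ≫ A ◁ mm := by
      rw [bm1]; simp only [Category.assoc, gath, gath', n22, n22', n22s, n22s', n21, n21', n11, n11', n10, n10']
    _ = A ◁ A ◁ A ◁ bb ≫ A ◁ (bb ≫ A ◁ bb ≫ mm) ≫ mm ≫ A ◁ mm := by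
      rw [massoc]; simp only [Category.assoc, gath, gath', n22, n22', n22s, n22s', n21, n21', n11, n11', n10, n10']
    _ = _ := by rw [← bm2]; simp only [Category.assoc, gath, gath', n22, n22', n22s, n22s', n21, n21', n11, n11', n10, n10']

theorem rlm2 (Y : C) : (A ◁ T22 (β_ A A).hom (A ⊗ (A ⊗ Y)) ≫ mm ≫ A ◁ mm) ≫ A ◁ mm =
    A ◁ A ◁ A ◁ mm ≫ A ◁ bb ≫ mm ≫ A ◁ mm := by
  calc _ = A ◁ bb ≫ mm ≫ A ◁ (mm ≫ mm) := by simp only [Category.assoc, gath, gath', n22, n22', n22s, n22s', n21, n21', n11, n11', n10, n10']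
    _ = _ := by rw [massoc]; simp only [Category.assoc, gath, gath', n22, n22', n22s, n22s', n21, n21', n11, n11', n10, n10']

theorem ndMM (hclosed : ∀ Y Y' : C, Y ∈ 𝒴 → Y' ∈ 𝒴 → (Y ⊗ Y') ∈ 𝒴) {Y : C} (hY : Y ∈ 𝒴)
    {X : C} (g g' : X ⟶ A ⊗ (A ⊗ Y))
    (h : A ◁ A ◁ g ≫ A ◁ bb ≫ mm ≫ A ◁ mm = A ◁ A ◁ g' ≫ A ◁ bb ≫ mm ≫ A ◁ mm) : g = g' :=
  nd_pair S.m S.ndl (T21 S.m Y) (nd_tail hclosed S.m S.ndl hY) S.memA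
    (hclosed _ _ S.memA hY) g g' h

theorem e1 (hclosed : ∀ Y Y' : C, Y ∈ 𝒴 → Y' ∈ 𝒴 → (Y ⊗ Y') ∈ 𝒴) {Y : C} (hY : Y ∈ 𝒴) :
    T22 S.e₁ (A ⊗ Y) ≫ A ◁ bb ≫ mm = A ◁ bb ≫ mm ≫ ee₁ := by
  apply ndMM S hclosed hY
  calc _ = A ◁ A ◁ ee₁ ≫ (A ◁ A ◁ A ◁ bb ≫ A ◁ A ◁ mm ≫ A ◁ bb ≫ mm ≫ A ◁ mm) := by
        simp only [Category.assoc, gath, gath', n22, n22', n22s, n22s', n21, n21', n11, n11', n10, n10']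
    _ = (A ◁ A ◁ ee₁ ≫ A ◁ bb ≫ mm ≫ A ◁ mm) ≫ A ◁ bb ≫ mm := by
        rw [← rlm1]; simp only [Category.assoc]
    _ = ee₂ ≫ ((A ◁ bb ≫ mm ≫ A ◁ mm) ≫ A ◁ bb ≫ mm) := by
        rw [wec]; simp only [Category.assoc]
    _ = A ◁ A ◁ A ◁ bb ≫ A ◁ A ◁ mm ≫ (ee₂ ≫ A ◁ bb ≫ mm ≫ A ◁ mm) := by
        rw [rlm1]; simp only [Category.assoc, gath, gath', n22, n22', n22s, n22s', n21, n21', n11, n11', n10, n10']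
    _ = _ := by rw [← wec]; simp only [Category.assoc, gath, gath', n22, n22', n22s, n22s', n21, n21', n11, n11', n10, n10']

theorem e2 (hclosed : ∀ Y Y' : C, Y ∈ 𝒴 → Y' ∈ 𝒴 → (Y ⊗ Y') ∈ 𝒴) {Y : C} (hY : Y ∈ 𝒴) :
    T22 S.e₁ (A ⊗ Y) ≫ A ◁ mm = A ◁ mm ≫ ee₁ := by
  apply ndMM S hclosed hY
  calc _ = A ◁ A ◁ ee₁ ≫ (A ◁ A ◁ A ◁ mm ≫ A ◁ bb ≫ mm ≫ A ◁ mm) := by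
        simp only [Category.assoc, gath, gath', n22, n22', n22s, n22s', n21, n21', n11, n11', n10, n10']
    _ = (A ◁ A ◁ ee₁ ≫ A ◁ bb ≫ mm ≫ A ◁ mm) ≫ A ◁ mm := by
        rw [← rlm2]; simp only [Category.assoc]
    _ = ee₂ ≫ ((A ◁ bb ≫ mm ≫ A ◁ mm) ≫ A ◁ mm) := by
        rw [wec]; simp only [Category.assoc]
    _ = A ◁ A ◁ A ◁ mm ≫ (ee₂ ≫ A ◁ bb ≫ mm ≫ A ◁ mm) := by
        rw [rlm2]; simp only [Category.assoc, gath, gath', n22, n22', n22s, n22s', n21, n21', n11, n11', n10, n10']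
    _ = _ := by rw [← wec]; simp only [Category.assoc, gath, gath', n22, n22', n22s, n22s', n21, n21', n11, n11', n10, n10']

theorem f_pre (hclosed : ∀ Y Y' : C, Y ∈ 𝒴 → Y' ∈ 𝒴 → (Y ⊗ Y') ∈ 𝒴) {Y : C} (hY : Y ∈ 𝒴) :
    (T22 S.t₄ (A ⊗ (A ⊗ Y)) ≫ A ◁ ee₁) ≫ A ◁ A ◁ bb ≫ A ◁ mm =
      (A ◁ ee₁ ≫ tt₄) ≫ A ◁ A ◁ bb ≫ A ◁ mm := by
  calc _ = tt₄ ≫ A ◁ (ee₁ ≫ A ◁ bb ≫ mm) := by simp only [Category.assoc, gath, gath', n22, n22', n22s, n22s', n21, n21', n11, n11', n10, n10']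
    _ = A ◁ A ◁ bb ≫ (tt₄ ≫ A ◁ mm) ≫ A ◁ ee₁ := by
      rw [e1 S hclosed hY]; simp only [Category.assoc, gath, gath', n22, n22', n22s, n22s', n21, n21', n11, n11', n10, n10']
    _ = A ◁ A ◁ bb ≫ A ◁ (tt₁ ≫ A ◁ ee₁) ≫ bb ≫ mm := by
      rw [← w14]; simp only [Category.assoc, gath, gath', n22, n22', n22s, n22s', n21, n21', n11, n11', n10, n10']
    _ = A ◁ A ◁ (bb ≫ bi) ≫ A ◁ (ee₁ ≫ A ◁ bb) ≫ (A ◁ tt₁ ≫ bb ≫ mm) := by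
      rw [wa6]; simp only [Category.assoc, gath, gath', n22, n22', n22s, n22s', n21, n21', n11, n11', n10, n10']
    _ = A ◁ (ee₁ ≫ A ◁ bb) ≫ (A ◁ tt₁ ≫ bb ≫ mm) := by
      rw [bbi, MonoidalCategory.whiskerLeft_id, MonoidalCategory.whiskerLeft_id,
        Category.id_comp]
    _ = _ := by rw [w14]; simp only [Category.assoc, gath, gath', n22, n22', n22s, n22s', n21, n21', n11, n11', n10, n10']

theorem f0 (hclosed : ∀ Y Y' : C, Y ∈ 𝒴 → Y' ∈ 𝒴 → (Y ⊗ Y') ∈ 𝒴) :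
    wl S.t₄ ≫ A ◁ S.e₁ = A ◁ S.e₁ ≫ wl S.t₄ := by
  have h : (wl S.t₄ ≫ A ◁ S.e₁) ≫ A ◁ (β_ A A).inv = (A ◁ S.e₁ ≫ wl S.t₄) ≫ A ◁ (β_ A A).inv := by
    apply nd_T33 S.m S.ndr S.memAA
    simp only [T33_comp, T33_wl, T33_l]
    have h1 := congrArg (fun z => z ≫ A ◁ bi) (f_pre S hclosed S.memI)
    have key : A ◁ T22 (β_ A A).inv (A ⊗ 𝟙_ C) ≫ A ◁ A ◁ T21 S.m (𝟙_ C) =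
        A ◁ A ◁ bb ≫ A ◁ mm ≫ A ◁ bi := by
      rw [gath, bm2']; simp only [Category.assoc, gath, gath', n22, n22', n22s, n22s', n21, n21', n11, n11', n10, n10']
    rw [Category.assoc, Category.assoc _ (A ◁ bi), key]
    simpa only [Category.assoc] using h1
  exact (cancel_mono _).1 h

theorem wf (hclosed : ∀ Y Y' : C, Y ∈ 𝒴 → Y' ∈ 𝒴 → (Y ⊗ Y') ∈ 𝒴) (Y : C) :
    T22 S.t₄ (A ⊗ Y) ≫ A ◁ ee₁ = A ◁ ee₁ ≫ tt₄ := by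
  simpa only [T33_comp, T33_wl, T33_l] using congrArg (T33 · Y) (S.f0 hclosed)

theorem wm4' (Y : C) : T22 S.t₄ Y ≫ A ◁ jj = bi ≫ mm := by
  rw [wm4, ← Category.assoc bi, bib, Category.id_comp]

theorem wii (hclosed : ∀ Y Y' : C, Y ∈ 𝒴 → Y' ∈ 𝒴 → (Y ⊗ Y') ∈ 𝒴) {Y : C} (hY : Y ∈ 𝒴) :
    T22 (β_ A A).hom (A ⊗ Y) ≫ tt₄ ≫ A ◁ ee₁ ≫ A ◁ jj = mm ≫ ee₁ := by
  calc _ = bb ≫ (tt₄ ≫ A ◁ ee₁) ≫ A ◁ jj := by simp only [Category.assoc]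
    _ = bb ≫ A ◁ ee₁ ≫ (tt₄ ≫ A ◁ jj) := by rw [wf S hclosed]; simp only [Category.assoc]
    _ = (bb ≫ A ◁ ee₁ ≫ bi) ≫ mm := by rw [wm4']; simp only [Category.assoc]
    _ = A ◁ bi ≫ (ee₁ ≫ A ◁ bb ≫ mm) := by rw [conj1]; simp only [Category.assoc]
    _ = A ◁ (bi ≫ bb) ≫ mm ≫ ee₁ := by rw [e1 S hclosed hY]; simp only [Category.assoc, gath, gath', n22, n22', n22s, n22s', n21, n21', n11, n11', n10, n10']
    _ = _ := by rw [bib, MonoidalCategory.whiskerLeft_id, Category.id_comp]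

/-- `e₁ d₁ = d₁` -/
theorem ed1 (hclosed : ∀ Y Y' : C, Y ∈ 𝒴 → Y' ∈ 𝒴 → (Y ⊗ Y') ∈ 𝒴) {Y : C} (hY : Y ∈ 𝒴) :
    (A ◁ T22 (β_ A A).inv Y ≫ tt₁ ≫ A ◁ bb ≫ mm) ≫ ee₁ =
      A ◁ bi ≫ tt₁ ≫ A ◁ bb ≫ mm := by
  calc _ = A ◁ bi ≫ tt₁ ≫ (A ◁ bb ≫ mm ≫ ee₁) := by simp only [Category.assoc]
    _ = A ◁ bi ≫ (tt₁ ≫ ee₁) ≫ A ◁ bb ≫ mm := by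
      rw [← e1 S hclosed hY]; simp only [Category.assoc]
    _ = _ := by rw [wa3]

end Words

end RWMB

/-- the diagonal action `(v ⊗ w) ∘ (1 ⊗ c ⊗ 1)` on right-nested words -/
def Pr {A V W : C} (v : A ⊗ V ⟶ V) (w : A ⊗ W ⟶ W) : A ⊗ (A ⊗ (V ⊗ W)) ⟶ V ⊗ W :=
  A ◁ T22 (β_ A V).hom W ≫ T21 v (A ⊗ W) ≫ V ◁ w

theorem actPair_eq {A V W : C} (v : A ⊗ V ⟶ V) (w : A ⊗ W ⟶ W) :
    actPair v w = (α_ A A (V ⊗ W)).hom ≫ Pr v w := by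
  simp [actPair, Pr, T22, T21]

theorem sIdem_eq {L : C} (μ : L ⊗ L ⟶ L) (ε : L ⟶ 𝟙_ C) {V W : C}
    (τbV : V ⟶ V ⊗ L) (τW : W ⟶ L ⊗ W) :
    sIdem μ ε τbV τW = T12 τbV W ≫ V ◁ L ◁ τW ≫ V ◁ T21 μ W ≫ V ◁ T10 ε W := by
  simp [sIdem, T12, T21, T10]

namespace RWMB

section Words

variable {A : C} {𝒴 : Set C} (S : RWMB A 𝒴)

local notation "bb" => T22 (Iso.hom (BraidedCategory.braiding _ _)) _
local notation "bi" => T22 (Iso.inv (BraidedCategory.braiding _ _)) _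
local notation "mm" => T21 (RWMB.m S) _
local notation "jj" => T10 (RWMB.j S) _
local notation "tt₁" => T22 (RWMB.t₁ S) _
local notation "tt₂" => T22 (RWMB.t₂ S) _
local notation "tt₄" => T22 (RWMB.t₄ S) _
local notation "ee₁" => T22 (RWMB.e₁ S) _
local notation "ee₂" => T22 (RWMB.e₂ S) _

theorem act_tail {V : C} (v : A ⊗ V ⟶ V) (hv : (A ◁ v) ≫ v = (α_ A A V).inv ≫ (S.m ▷ V) ≫ v)
    (Y : C) : T21 S.m (V ⊗ Y) ≫ T21 v Y = A ◁ T21 v Y ≫ T21 v Y := by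
  have h := congrArg (fun z => A ◁ (α_ A V Y).inv ≫ (α_ A (A ⊗ V) Y).inv ≫ z ▷ Y) hv
  refine Eq.trans ?_ (h.symm.trans ?_)
  · simp only [T21]; monoidal
  · simp only [T21]; monoidal

theorem prassoc {V W : C} (v : A ⊗ V ⟶ V) (w : A ⊗ W ⟶ W)
    (hv : (A ◁ v) ≫ v = (α_ A A V).inv ≫ (S.m ▷ V) ≫ v)
    (hw : (A ◁ w) ≫ w = (α_ A A W).inv ≫ (S.m ▷ W) ≫ w) :
    (A ◁ T22 (β_ A A).hom (A ⊗ (V ⊗ W)) ≫ mm ≫ A ◁ mm) ≫ Pr v w = A ◁ A ◁ Pr v w ≫ Pr v w := by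
  have hw' : T21 S.m W ≫ w = A ◁ w ≫ w := by rw [hw, T21, Category.assoc]
  unfold Pr
  calc _ = A ◁ bb ≫ mm ≫ A ◁ (T21 S.m (V ⊗ W) ≫ T22 (β_ A V).hom W) ≫
        T21 v (A ⊗ W) ≫ V ◁ w := by simp only [Category.assoc, gath, gath', n22, n22', n22s, n22s', n21, n21', n11, n11', n10, n10']
    _ = A ◁ (bb ≫ A ◁ A ◁ bb ≫ A ◁ bb) ≫ (mm ≫ T21 v (A ⊗ (A ⊗ W))) ≫
        V ◁ (T21 S.m W ≫ w) := by
      rw [bm1]; simp only [Category.assoc, gath, gath', n22, n22', n22s, n22s', n21, n21', n11, n11', n10, n10']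
    _ = A ◁ A ◁ A ◁ bb ≫ A ◁ (T22 (β_ A A).hom (V ⊗ (A ⊗ W)) ≫
          A ◁ T22 (β_ A V).hom (A ⊗ W) ≫ T21 v (A ⊗ (A ⊗ W))) ≫
        T21 v (A ⊗ (A ⊗ W)) ≫ V ◁ (A ◁ w ≫ w) := by
      rw [S.act_tail v hv, hw']; simp only [Category.assoc, gath, gath', n22, n22', n22s, n22s', n21, n21', n11, n11', n10, n10']
    _ = _ := by rw [← bm2]; simp only [Category.assoc, gath, gath', n22, n22', n22s, n22s', n21, n21', n11, n11', n10, n10']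

theorem tau_tail {L V : C} (v : A ⊗ V ⟶ V) (τbar : A ⟶ A ⊗ L) (τb : V ⟶ V ⊗ L)
    (h : v ≫ τb = (τbar ▷ V) ≫ (α_ A L V).hom ≫ (A ◁ (β_ L V).hom) ≫
      (α_ A V L).inv ≫ (v ▷ L)) (Y : C) :
    T21 v Y ≫ T12 τb Y = T12 τbar (V ⊗ Y) ≫ A ◁ T22 (β_ L V).hom Y ≫ T21 v (L ⊗ Y) := by
  have h := congrArg (fun z => (α_ A V Y).inv ≫ z ▷ Y ≫ (α_ _ _ _).hom) h
  refine Eq.trans ?_ (h.trans ?_)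
  · simp [T21, T12]
  · simp only [T21, T12, T22]; monoidal

theorem m_tau {L : C} (p : A ⟶ L) (τ : A ⟶ L ⊗ A) (hτ : S.m ≫ τ = S.t₁ ≫ (p ▷ A)) (Y : C) :
    T21 S.m Y ≫ T12 τ Y = tt₁ ≫ p ▷ (A ⊗ Y) := by
  have h := congrArg (fun z => (α_ A A Y).inv ≫ z ▷ Y ≫ (α_ _ _ _).hom) hτ
  refine Eq.trans ?_ (h.trans ?_)
  · simp [T21, T12]
  · simp [T22]

theorem m_taubar {L : C} (p : A ⟶ L) (τbar : A ⟶ A ⊗ L)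
    (hτbar : S.m ≫ τbar = (β_ A A).hom ≫ S.t₄ ≫ (A ◁ p)) (Y : C) :
    T21 S.m Y ≫ T12 τbar Y = bb ≫ tt₄ ≫ A ◁ (p ▷ Y) := by
  have h := congrArg (fun z => (α_ A A Y).inv ≫ z ▷ Y ≫ (α_ _ _ _).hom) hτbar
  refine Eq.trans ?_ (h.trans ?_)
  · simp [T21, T12]
  · simp [T22]

theorem pmu {L : C} (p : A ⟶ L) (n₁ : L ⊗ A ⟶ A) (hn₁ : (p ▷ A) ≫ n₁ = S.piL1)
    (μ : L ⊗ L ⟶ L) (hμ : (L ◁ p) ≫ μ = n₁ ≫ p) (ε : L ⟶ 𝟙_ C) (hε : p ≫ ε = S.j) (Y : C) :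
    p ▷ (A ⊗ Y) ≫ L ◁ (p ▷ Y) ≫ T21 μ Y ≫ T10 ε Y = ee₁ ≫ jj ≫ jj := by
  have h : p ▷ A ≫ L ◁ p ≫ μ ≫ ε = S.e₁ ≫ (S.j ▷ A) ≫ (λ_ A).hom ≫ S.j := by
    rw [← Category.assoc (L ◁ p), hμ, Category.assoc, hε, ← Category.assoc, hn₁]
    simp [piL1]
  have h := congrArg (fun z => (α_ A A Y).inv ≫ z ▷ Y ≫ (λ_ _).hom) h
  refine Eq.trans ?_ (h.trans ?_)
  · simp only [T21, T10]; monoidal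
  · simp only [T22, T10]; monoidal

theorem sP1 {L V W : C} (v : A ⊗ V ⟶ V) (w : A ⊗ W ⟶ W)
    (μ : L ⊗ L ⟶ L) (ε : L ⟶ 𝟙_ C) (τ : A ⟶ L ⊗ A) (τbar : A ⟶ A ⊗ L)
    (τb : V ⟶ V ⊗ L)
    (hτb : v ≫ τb = (τbar ▷ V) ≫ (α_ A L V).hom ≫ (A ◁ (β_ L V).hom) ≫
      (α_ A V L).inv ≫ (v ▷ L))
    (τN : W ⟶ L ⊗ W)
    (hτN : w ≫ τN = (τ ▷ W) ≫ (α_ L A W).hom ≫ (L ◁ w)) :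
    Pr v w ≫ sIdem μ ε τb τN = T12 τbar (A ⊗ (V ⊗ W)) ≫ A ◁ L ◁ T12 τ (V ⊗ W) ≫
      A ◁ T21 μ _ ≫ A ◁ T10 ε _ ≫ Pr v w := by
  have hτN' : w ≫ τN = T12 τ W ≫ L ◁ w := by rw [hτN, T12, Category.assoc]
  rw [sIdem_eq]
  unfold Pr
  calc _ = A ◁ bb ≫ (T21 v (A ⊗ W) ≫ T12 τb (A ⊗ W)) ≫ V ◁ L ◁ (w ≫ τN) ≫
        V ◁ T21 μ W ≫ V ◁ T10 ε W := by simp only [Category.assoc, gath, gath', n22, n22', n22s, n22s', n21, n21', n11, n11', n10, n10', n12, n12', n12s, n12s']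
    _ = T12 τbar _ ≫ A ◁ (L ◁ (T22 (β_ A V).hom W ≫ V ◁ T12 τ W) ≫ T22 (β_ L V).hom _ ≫
          V ◁ T21 μ _ ≫ V ◁ T10 ε _) ≫ T21 v (A ⊗ W) ≫ V ◁ w := by
      rw [tau_tail v τbar τb hτb, hτN']; simp only [Category.assoc, gath, gath', n22, n22', n22s, n22s', n21, n21', n11, n11', n10, n10', n12, n12', n12s, n12s']
    _ = T12 τbar _ ≫ A ◁ (L ◁ (T12 τ (V ⊗ W) ≫ L ◁ T22 (β_ A V).hom W) ≫
          (L ◁ T22 (β_ L V).hom (A ⊗ W) ≫ T22 (β_ L V).hom _ ≫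
          V ◁ T21 μ _) ≫ V ◁ T10 ε _) ≫ T21 v (A ⊗ W) ≫ V ◁ w := by
      rw [bt1]; simp only [Category.assoc, gath, gath', n22, n22', n22s, n22s', n21, n21', n11, n11', n10, n10', n12, n12', n12s, n12s']
    _ = T12 τbar _ ≫ A ◁ (L ◁ (T12 τ (V ⊗ W) ≫ L ◁ T22 (β_ A V).hom W) ≫ T21 μ _ ≫
          (T22 (β_ L V).hom (A ⊗ W) ≫ V ◁ T10 ε _)) ≫ T21 v (A ⊗ W) ≫ V ◁ w := by
      rw [← bm1]; simp only [Category.assoc]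
    _ = _ := by rw [bj1]; simp only [Category.assoc, gath, gath', n22, n22', n22s, n22s', n21, n21', n11, n11', n10, n10', n12, n12', n12s, n12s']

theorem sP2 (hclosed : ∀ Y Y' : C, Y ∈ 𝒴 → Y' ∈ 𝒴 → (Y ⊗ Y') ∈ 𝒴) {L Z : C} (hZ : Z ∈ 𝒴)
    (p : A ⟶ L) (n₁ : L ⊗ A ⟶ A) (hn₁ : (p ▷ A) ≫ n₁ = S.piL1)
    (μ : L ⊗ L ⟶ L) (hμ : (L ◁ p) ≫ μ = n₁ ≫ p) (ε : L ⟶ 𝟙_ C) (hε : p ≫ ε = S.j)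
    (τ : A ⟶ L ⊗ A) (hτ : S.m ≫ τ = S.t₁ ≫ (p ▷ A))
    (τbar : A ⟶ A ⊗ L) (hτbar : S.m ≫ τbar = (β_ A A).hom ≫ S.t₄ ≫ (A ◁ p)) :
    (T21 S.m (A ⊗ (A ⊗ Z)) ≫ A ◁ T21 S.m Z) ≫ T12 τbar (A ⊗ Z) ≫ A ◁ L ◁ T12 τ Z ≫
      A ◁ T21 μ _ ≫ A ◁ T10 ε _ = (T21 S.m (A ⊗ (A ⊗ Z)) ≫ A ◁ T21 S.m Z) ≫ ee₁ := by
  calc _ = (T21 S.m (A ⊗ (A ⊗ Z)) ≫ T12 τbar (A ⊗ (A ⊗ Z))) ≫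
        A ◁ L ◁ (T21 S.m Z ≫ T12 τ Z) ≫ A ◁ T21 μ _ ≫ A ◁ T10 ε _ := by simp only [Category.assoc, gath, gath', n22, n22', n22s, n22s', n21, n21', n11, n11', n10, n10', n12, n12', n12s, n12s']
    _ = bb ≫ tt₄ ≫ A ◁ A ◁ tt₁ ≫ A ◁ (p ▷ (A ⊗ (A ⊗ Z)) ≫ L ◁ (p ▷ (A ⊗ Z)) ≫
        T21 μ (A ⊗ Z) ≫ T10 ε (A ⊗ Z)) := by
      rw [S.m_tau p τ hτ, S.m_taubar p τbar hτbar]; simp only [Category.assoc, gath, gath', n22, n22', n22s, n22s', n21, n21', n11, n11', n10, n10', n12, n12', n12s, n12s']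
    _ = bb ≫ tt₄ ≫ A ◁ (A ◁ tt₁ ≫ ee₁) ≫ A ◁ jj ≫ A ◁ jj := by
      rw [S.pmu p n₁ hn₁ μ hμ ε hε]; simp only [Category.assoc, gath, gath', n22, n22', n22s, n22s', n21, n21', n11, n11', n10, n10', n12, n12', n12s, n12s']
    _ = (bb ≫ tt₄ ≫ A ◁ ee₁ ≫ A ◁ jj) ≫ A ◁ (tt₁ ≫ jj) := by
      rw [wa5]; simp only [Category.assoc, gath, gath', n22, n22', n22s, n22s', n21, n21', n11, n11', n10, n10']
    _ = mm ≫ (ee₁ ≫ A ◁ mm) := by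
      rw [S.wii hclosed (hclosed _ _ S.memA hZ), ← wm1, Category.assoc]
    _ = _ := by rw [S.e2 hclosed hZ, Category.assoc]

end Words

end RWMB

/-! ### Regular epimorphisms -/

theorem reg_left (presL : ∀ X : C, PreservesColimitsOfShape WalkingParallelPair (tensorLeft X))
    (X : C) {P Q : C} (f : P ⟶ Q) (hf : Nonempty (RegularEpi f)) :
    Nonempty (RegularEpi (X ◁ f)) := by
  obtain ⟨hf⟩ := hf
  have := presL X
  exact ⟨⟨_, _, _, _, isColimitCoforkMapOfIsColimit (tensorLeft X) _ hf.isColimit⟩⟩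

theorem reg_right (presR : ∀ X : C, PreservesColimitsOfShape WalkingParallelPair (tensorRight X))
    (X : C) {P Q : C} (f : P ⟶ Q) (hf : Nonempty (RegularEpi f)) :
    Nonempty (RegularEpi (f ▷ X)) := by
  obtain ⟨hf⟩ := hf
  have := presR X
  exact ⟨⟨_, _, _, _, isColimitCoforkMapOfIsColimit (tensorRight X) _ hf.isColimit⟩⟩

theorem reg_iso {P Q : C} (f : P ⟶ Q) [IsIso f] : Nonempty (RegularEpi f) :=
  ⟨RegularEpi.ofIso (asIso f)⟩

theorem reg_epi {P Q : C} (f : P ⟶ Q) (hf : Nonempty (RegularEpi f)) : Epi f := by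
  obtain ⟨hf⟩ := hf
  exact RegularEpi.epi f hf

theorem reg_desc {P Q R : C} (f : P ⟶ Q) (hf : Nonempty (RegularEpi f)) (k : P ⟶ R)
    (hk : ∀ (X : C) (a b : X ⟶ P), a ≫ f = b ≫ f → a ≫ k = b ≫ k) : ∃ l : Q ⟶ R, f ≫ l = k := by
  obtain ⟨hf⟩ := hf
  obtain ⟨l, hl⟩ := RegularEpi.desc' hf k (hk _ _ _ hf.w)
  exact ⟨l, hl⟩

instance T22_iso {A B D E : C} (f : A ⊗ B ⟶ D ⊗ E) [IsIso f] (Y : C) : IsIso (T22 f Y) := by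
  unfold T22; infer_instance

theorem T32_dOne {A : C} (m : A ⊗ A ⟶ A) (t₁ : A ⊗ A ⟶ A ⊗ A) (Y : C) :
    T32 (dOne m t₁) Y = A ◁ T22 (β_ A A).inv Y ≫ T22 t₁ (A ⊗ Y) ≫ A ◁ T22 (β_ A A).hom Y ≫
      T21 m (A ⊗ Y) := by
  simp only [dOne, T32_comp, T33_wl, T33_l, T32_ml]

theorem T32_dTwo {A : C} (m : A ⊗ A ⟶ A) (t₂ : A ⊗ A ⟶ A ⊗ A) (Y : C) :
    T32 (dTwo m t₂) Y = T22 (β_ A A).inv (A ⊗ Y) ≫ A ◁ T22 t₂ Y ≫ T22 (β_ A A).hom (A ⊗ Y) ≫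
      A ◁ T21 m Y := by
  simp only [dTwo, T32_comp, T33_wl, T33_l, T32_l]

theorem dOne_conv {A Z : C} (f : A ⊗ (A ⊗ A) ⟶ A ⊗ A) (P : A ⊗ (A ⊗ Z) ⟶ Z) :
    (α_ A (A ⊗ A) Z).inv ≫ f ▷ Z ≫ (α_ A A Z).hom ≫ P = A ◁ (α_ A A Z).hom ≫ T32 f Z ≫ P := by
  simp [T32]

theorem dTwo_conv {A Z : C} (f : A ⊗ (A ⊗ A) ⟶ A ⊗ A) (P : A ⊗ (A ⊗ Z) ⟶ Z) :
    (α_ (A ⊗ A) A Z).inv ≫ (α_ A A A).hom ▷ Z ≫ f ▷ Z ≫ (α_ A A Z).hom ≫ P =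
      (α_ A A (A ⊗ Z)).hom ≫ T32 f Z ≫ P := by
  simp only [T32]; monoidal

/-- naturality of `d₂` in the tail -/
theorem T32_nat {A Y Y' : C} (f : A ⊗ (A ⊗ A) ⟶ A ⊗ A) (g : Y ⟶ Y') :
    A ◁ A ◁ A ◁ g ≫ T32 f Y' = T32 f Y ≫ A ◁ A ◁ g := by
  have h := whisker_exchange f g
  calc _ = A ◁ (α_ A A Y).inv ≫ (α_ A (A ⊗ A) Y).inv ≫ ((A ⊗ (A ⊗ A)) ◁ g ≫ f ▷ Y') ≫
        (α_ A A Y').hom := by simp only [T32]; monoidal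
    _ = _ := by rw [h]; simp only [T32]; monoidal

/-- Lemma 4.6: for `A`-modules `(V, v)` and `(W, w)` there is an
associative `A`-action `b⁰ : A ⊗ (V ⊗ W) ⟶ V ⊗ W`, uniquely determined by
`b⁰ ∘ (1 ⊗ ((v ⊗ w) ∘ (1 ⊗ c ⊗ 1))) = (v ⊗ w) ∘ (1 ⊗ c ⊗ 1) ∘ (d₁ ⊗ 1 ⊗ 1)`,
which absorbs the canonical idempotent `s` on both sides and satisfies the stated
relation with `d₂`. -/
theorem lemma_action_b0
    [HasCoequalizers C]
    (presL : ∀ X : C, PreservesColimitsOfShape WalkingParallelPair (tensorLeft X))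
    (presR : ∀ X : C, PreservesColimitsOfShape WalkingParallelPair (tensorRight X))
    (regcomp : ∀ {X Y Z : C} (f : X ⟶ Y) (g : Y ⟶ Z),
      Nonempty (RegularEpi f) → Nonempty (RegularEpi g) → Nonempty (RegularEpi (f ≫ g)))
    {A : C} {𝒴 : Set C} (S : RWMB A 𝒴)
    (hmreg : Nonempty (RegularEpi S.m))
    (hclosed : ∀ Y Y' : C, Y ∈ 𝒴 → Y' ∈ 𝒴 → (Y ⊗ Y') ∈ 𝒴)
    (L : C) (p : A ⟶ L)
    (hpc : S.piL1 ≫ p = S.piBarR1c ≫ p)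
    (hpu : ∀ {X : C} (h : A ⟶ X), S.piL1 ≫ h = S.piBarR1c ≫ h →
      ∃! k : L ⟶ X, p ≫ k = h)
    (memL : L ∈ 𝒴)
    (n₁ : L ⊗ A ⟶ A) (hn₁ : (p ▷ A) ≫ n₁ = S.piL1)
    (hndn₁ : NdRightOn n₁ 𝒴)
    (n₂ : A ⊗ L ⟶ A) (hn₂ : (A ◁ p) ≫ n₂ = S.piL2)
    (μ : L ⊗ L ⟶ L) (hμ : (L ◁ p) ≫ μ = n₁ ≫ p)
    (δ : L ⟶ L ⊗ L) (hδ : S.m ≫ p ≫ δ = S.t₁ ≫ (p ▷ A) ≫ (L ◁ p))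
    (ε : L ⟶ 𝟙_ C) (hε : p ≫ ε = S.j)
    (hμδ : δ ≫ μ = 𝟙 L)
    (τ : A ⟶ L ⊗ A) (hτ : S.m ≫ τ = S.t₁ ≫ (p ▷ A))
    (τbar : A ⟶ A ⊗ L) (hτbar : S.m ≫ τbar = (β_ A A).hom ≫ S.t₄ ≫ (A ◁ p))
    (M N : AModule A S.m 𝒴)
    (τbM : M.V ⟶ M.V ⊗ L)
    (hτbM : M.act ≫ τbM = (τbar ▷ M.V) ≫ (α_ A L M.V).hom ≫ (A ◁ (β_ L M.V).hom) ≫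
      (α_ A M.V L).inv ≫ (M.act ▷ L))
    (τN : N.V ⟶ L ⊗ N.V)
    (hτN : N.act ≫ τN = (τ ▷ N.V) ≫ (α_ L A N.V).hom ≫ (L ◁ N.act)) :
    ∃ b0 : A ⊗ (M.V ⊗ N.V) ⟶ M.V ⊗ N.V,
      -- the defining property ...
      ((A ◁ actPair M.act N.act) ≫ b0
        = (α_ A (A ⊗ A) (M.V ⊗ N.V)).inv ≫ (dOne S.m S.t₁ ▷ (M.V ⊗ N.V)) ≫
            actPair M.act N.act) ∧
      -- ... which determines `b⁰` uniquely
      (∀ b0' : A ⊗ (M.V ⊗ N.V) ⟶ M.V ⊗ N.V,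
        (A ◁ actPair M.act N.act) ≫ b0'
          = (α_ A (A ⊗ A) (M.V ⊗ N.V)).inv ≫ (dOne S.m S.t₁ ▷ (M.V ⊗ N.V)) ≫
              actPair M.act N.act → b0' = b0) ∧
      -- `b⁰` is an associative `A`-action
      ((A ◁ b0) ≫ b0 = (α_ A A (M.V ⊗ N.V)).inv ≫ (S.m ▷ (M.V ⊗ N.V)) ≫ b0) ∧
      -- `s ∘ b⁰ = b⁰ = b⁰ ∘ (1 ⊗ s)`
      (b0 ≫ sIdem μ ε τbM τN = b0) ∧
      ((A ◁ sIdem μ ε τbM τN) ≫ b0 = b0) ∧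
      -- `(v ⊗ w) ∘ (1 ⊗ c ⊗ 1) ∘ (d₂ ⊗ 1 ⊗ 1) = (v ⊗ w) ∘ (1 ⊗ c ⊗ 1) ∘ (1 ⊗ 1 ⊗ b⁰)`
      ((α_ (A ⊗ A) A (M.V ⊗ N.V)).inv ≫ ((α_ A A A).hom ▷ (M.V ⊗ N.V)) ≫
          (dTwo S.m S.t₂ ▷ (M.V ⊗ N.V)) ≫ actPair M.act N.act
        = ((A ⊗ A) ◁ b0) ≫ actPair M.act N.act) := by
  have hZ : (M.V ⊗ N.V) ∈ 𝒴 := hclosed _ _ M.mem N.mem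
  -- epimorphisms
  have regP : Nonempty (RegularEpi (Pr M.act N.act)) := by
    refine regcomp _ _ (reg_iso _) (regcomp _ _ ?_ (reg_left presL _ _ N.regEpi))
    exact regcomp _ _ (reg_iso _) (reg_right presR _ _ M.regEpi)
  have regAP : Nonempty (RegularEpi (A ◁ Pr M.act N.act)) := reg_left presL _ _ regP
  have eAP : Epi (A ◁ Pr M.act N.act) := reg_epi _ regAP
  have eAAP : Epi (A ◁ A ◁ Pr M.act N.act) := reg_epi _ (reg_left presL _ _ regAP)
  have eAAAP : Epi (A ◁ A ◁ A ◁ Pr M.act N.act) :=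
    reg_epi _ (reg_left presL _ _ (reg_left presL _ _ regAP))
  have regm : ∀ Y : C, Nonempty (RegularEpi (T21 S.m Y)) := fun Y =>
    regcomp _ _ (reg_iso _) (reg_right presR _ _ hmreg)
  have emm : Epi (T21 S.m (A ⊗ (A ⊗ (M.V ⊗ N.V))) ≫ A ◁ T21 S.m (M.V ⊗ N.V)) :=
    reg_epi _ (regcomp _ _ (regm _) (reg_left presL _ _ (regm _)))
  -- the key facts
  have hPP := S.prassoc M.act N.act M.assoc N.assoc
  have hD12 := S.d12 (M.V ⊗ N.V)
  have hDD := S.d1assoc (M.V ⊗ N.V)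
  have hED := S.ed1 hclosed hZ
  have hDE := S.wa4 (M.V ⊗ N.V)
  have hsP : Pr M.act N.act ≫ sIdem μ ε τbM τN = T22 S.e₁ _ ≫ Pr M.act N.act := by
    rw [← cancel_epi (T21 S.m (A ⊗ (A ⊗ (M.V ⊗ N.V))) ≫ A ◁ T21 S.m (M.V ⊗ N.V)),
      RWMB.sP1 M.act N.act μ ε τ τbar τbM hτbM τN hτN]
    have h := congrArg (· ≫ Pr M.act N.act)
      (S.sP2 hclosed hZ p n₁ hn₁ μ hμ ε hε τ hτ τbar hτbar)
    simpa only [Category.assoc] using h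
  rw [← T32_dOne] at hDD hED hDE
  rw [← T32_dOne, ← T32_dTwo] at hD12
  have hND : ∀ {X : C} (g g' : X ⟶ M.V ⊗ N.V),
      A ◁ A ◁ g ≫ Pr M.act N.act = A ◁ A ◁ g' ≫ Pr M.act N.act → g = g' :=
    fun g g' h => nd_pair M.act M.nd N.act N.nd M.mem N.mem g g' h
  -- the compatibility of `d₁` and `d₂` on the module
  have hDP : A ◁ A ◁ (T32 (dOne S.m S.t₁) (M.V ⊗ N.V) ≫ Pr M.act N.act) ≫ Pr M.act N.act =
      A ◁ A ◁ A ◁ Pr M.act N.act ≫ T32 (dTwo S.m S.t₂) (M.V ⊗ N.V) ≫ Pr M.act N.act := by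
    rw [← Category.assoc (A ◁ A ◁ A ◁ Pr M.act N.act), T32_nat, Category.assoc, ← hPP,
      ← Category.assoc, ← hD12, Category.assoc, hPP]
    simp only [MonoidalCategory.whiskerLeft_comp, Category.assoc]
  obtain ⟨b0, hb⟩ := reg_desc _ regAP (T32 (dOne S.m S.t₁) (M.V ⊗ N.V) ≫ Pr M.act N.act) (by
    intro X a b hab
    apply hND
    have key : ∀ c : X ⟶ A ⊗ (A ⊗ (A ⊗ (M.V ⊗ N.V))),
        A ◁ A ◁ (c ≫ T32 (dOne S.m S.t₁) (M.V ⊗ N.V) ≫ Pr M.act N.act) ≫ Pr M.act N.act =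
        A ◁ A ◁ (c ≫ A ◁ Pr M.act N.act) ≫ T32 (dTwo S.m S.t₂) (M.V ⊗ N.V) ≫
          Pr M.act N.act := by
      intro c
      rw [MonoidalCategory.whiskerLeft_comp A c, MonoidalCategory.whiskerLeft_comp A (A ◁ c),
        Category.assoc, hDP]
      simp only [MonoidalCategory.whiskerLeft_comp, Category.assoc]
    rw [key, key, hab])
  refine ⟨b0, ?_, ?_, ?_, ?_, ?_, ?_⟩
  · rw [actPair_eq, dOne_conv, ← hb]
    simp only [MonoidalCategory.whiskerLeft_comp, Category.assoc]
  · intro b0' h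
    rw [actPair_eq, dOne_conv, MonoidalCategory.whiskerLeft_comp, Category.assoc,
      cancel_epi, ← hb, cancel_epi] at h
    exact h
  · rw [← cancel_epi (A ◁ A ◁ Pr M.act N.act)]
    calc _ = A ◁ (A ◁ Pr M.act N.act ≫ b0) ≫ b0 := by
          simp only [MonoidalCategory.whiskerLeft_comp, Category.assoc]
      _ = A ◁ T32 (dOne S.m S.t₁) (M.V ⊗ N.V) ≫ (A ◁ Pr M.act N.act ≫ b0) := by
          rw [hb, MonoidalCategory.whiskerLeft_comp, Category.assoc, hb]
      _ = (A ◁ T32 (dOne S.m S.t₁) (M.V ⊗ N.V) ≫ T32 (dOne S.m S.t₁) (M.V ⊗ N.V)) ≫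
          Pr M.act N.act := by
          rw [hb, Category.assoc]
      _ = T21 S.m _ ≫ (A ◁ Pr M.act N.act ≫ b0) := by
          rw [hDD, hb, T32_dOne]; simp only [Category.assoc]
      _ = (A ◁ A ◁ Pr M.act N.act ≫ T21 S.m _) ≫ b0 := by
          rw [← n21]; simp only [Category.assoc]
      _ = _ := by simp only [T21, Category.assoc]
  · rw [← cancel_epi (A ◁ Pr M.act N.act), ← Category.assoc, hb, Category.assoc, hsP,
      ← Category.assoc, hED]
  · rw [← cancel_epi (A ◁ Pr M.act N.act), ← Category.assoc, gath, hsP,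
      MonoidalCategory.whiskerLeft_comp, Category.assoc, hb, ← Category.assoc, hDE]
  · rw [actPair_eq, dTwo_conv]
    have h : T32 (dTwo S.m S.t₂) (M.V ⊗ N.V) ≫ Pr M.act N.act =
        A ◁ A ◁ b0 ≫ Pr M.act N.act := by
      rw [← cancel_epi (A ◁ A ◁ A ◁ Pr M.act N.act), ← hDP, ← hb]
      simp only [MonoidalCategory.whiskerLeft_comp, Category.assoc]
    rw [h]
    simp

end WeakMultiplierBimonoid
end
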